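/- Let l and r be positive integers and ζ a primitive l-th root of unity. Then Q'_{(r^l)}(x; q, ζ) = (−1)^{(l−1)r} · (p_l ∘ h_r)(x), where (r^l) denotes the rectangular partition with l parts equal to r. -/

import Mathlib

open MvPolynomial

noncomputable section MacdonaldPreliminaries

/-! ### Base fields: `KK = ℂ(q)` and `FF = ℂ(q)(t)` -/

/-- The field `ℂ(q)` of rational functions in the indeterminate `q`. -/
abbrev KK : Type := RatFunc ℂ

/-- The field `ℂ(q)(t) = ℂ(q,t)`, rational functions in `t` over `ℂ(q)`. -/
abbrev FF : Type := RatFunc KK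

/-- The indeterminate `q`, as an element of `ℂ(q)`. -/
def qK : KK := RatFunc.X

/-- The indeterminate `q`, as an element of `ℂ(q,t)`. -/
def qF : FF := RatFunc.C qK

/-- The indeterminate `t`, as an element of `ℂ(q,t)`. -/
def tF : FF := RatFunc.X

/-! ### The ring of symmetric functions

We model the ring `Λ_R` of symmetric functions over `R` as the free commutative
`R`-algebra on the power sums `p₁, p₂, p₃, …`, i.e. as the polynomial ring in
countably many variables `X k`, `k : ℕ+`, where `X k` represents the power sum `p_k`. -/

/-- The ring of symmetric functions over `R`: polynomials in the power sums `p_k = X k`. -/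
abbrev SymFn (R : Type) [CommSemiring R] : Type := MvPolynomial ℕ+ R

section Core

variable {R : Type} [Field R]

/-- The power sum `p_d` for `d : ℕ`, with `p_0 = 1` by convention. -/
def pN (d : ℕ) : SymFn R := if h : 0 < d then X (⟨d, h⟩ : ℕ+) else 1

/-- `p_λ = ∏ p_{λᵢ}` for a partition `λ` given as a multiset of positive parts. -/
def pPar (lam : Multiset ℕ+) : SymFn R := (lam.map fun k => (X k : SymFn R)).prod

/-- The complete homogeneous symmetric functions, defined by Newton's recursion
`n·h_n = ∑_{i=1}^n p_i · h_{n-i}` with `h_0 = 1`. -/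
def hsym : ℕ → SymFn R
  | 0 => 1
  | (n+1) => (((n : R) + 1)⁻¹) • ∑ i ∈ Finset.range (n+1),
      (X (⟨i+1, Nat.succ_pos i⟩ : ℕ+) : SymFn R) * hsym (n - i)
decreasing_by exact Nat.lt_succ_of_le (Nat.sub_le n i)

/-- `h_z` for an integer index, vanishing for negative `z` (used in Jacobi–Trudi). -/
def hInt (z : ℤ) : SymFn R := if 0 ≤ z then hsym (R := R) z.toNat else 0

/-- The parts of a partition (a multiset of positive integers), sorted decreasingly. -/
def descParts (lam : Multiset ℕ+) : List ℕ :=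
  ((lam.map fun a : ℕ+ => (a : ℕ)).sort (· ≤ ·)).reverse

/-- The weight `|λ|` of a partition. -/
def wt (lam : Multiset ℕ+) : ℕ := (lam.map fun a : ℕ+ => (a : ℕ)).sum

/-- The Schur function `s_λ`, via the Jacobi–Trudi formula
`s_λ = det(h_{λᵢ - i + j})₁≤i,j≤ℓ`. -/
def schur (lam : Multiset ℕ+) : SymFn R :=
  Matrix.det (Matrix.of fun i j : Fin (Multiset.card lam) =>
    hInt (R := R) ((((descParts lam).getD i 0 : ℕ) : ℤ) + (j : ℤ) - (i : ℤ)))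

/-- `h_ν = ∏ h_{νⱼ}` for a partition `ν`. -/
def hPar (nu : Multiset ℕ+) : SymFn R := (nu.map fun a => hsym (R := R) (a : ℕ)).prod

/-! ### Inner products -/

/-- The `(q,t)`-deformed weight `z_λ(q,t)` attached to the monomial `∏ (X k)^(m k)`,
namely `∏_k (m k)! · k^(m k) · ((1-q^k)/(1-t^k))^(m k)`. -/
def zwtQT (q t : R) (m : ℕ+ →₀ ℕ) : R :=
  ∏ k ∈ m.support,
    ((Nat.factorial (m k) : R) * ((k : ℕ) : R) ^ (m k) *
      ((1 - q ^ (k : ℕ)) / (1 - t ^ (k : ℕ))) ^ (m k))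

/-- The Macdonald inner product `⟨·,·⟩_{q,t}`, defined on the power sum basis by
`⟨p_λ, p_μ⟩_{q,t} = δ_{λμ} z_λ(q,t)`. -/
def innerQT (q t : R) (f g : SymFn R) : R :=
  ∑ m ∈ f.support, MvPolynomial.coeff m f * MvPolynomial.coeff m g * zwtQT q t m

/-- The classical weight `z_λ = ∏_k (m k)! k^(m k)` attached to a monomial. -/
def zwtH (m : ℕ+ →₀ ℕ) : R :=
  ∏ k ∈ m.support, ((Nat.factorial (m k) : R) * ((k : ℕ) : R) ^ (m k))

/-- The standard Hall inner product, `⟨p_λ, p_μ⟩ = δ_{λμ} z_λ`. -/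
def innerH (f g : SymFn R) : R :=
  ∑ m ∈ f.support, MvPolynomial.coeff m f * MvPolynomial.coeff m g * zwtH (R := R) m

/-- The internal (Kronecker) product `⋆`, determined by `p_λ ⋆ p_μ = δ_{λμ} z_λ p_λ`. -/
def star (f g : SymFn R) : SymFn R :=
  ∑ m ∈ f.support,
    MvPolynomial.monomial m (MvPolynomial.coeff m f * MvPolynomial.coeff m g * zwtH (R := R) m)

/-! ### Dominance order and the Macdonald basis -/

/-- Sum of the `k` largest parts of `λ`. -/
def pSum (lam : Multiset ℕ+) (k : ℕ) : ℕ := ((descParts lam).take k).sum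

/-- `μ` is strictly dominated by `λ`: same weight, `μ ≠ λ`, and all partial sums of the
decreasingly sorted parts of `μ` are at most those of `λ`. -/
def StrictDom (mu lam : Multiset ℕ+) : Prop :=
  mu ≠ lam ∧ wt mu = wt lam ∧ ∀ k, pSum mu k ≤ pSum lam k

/-- Characterization of the Macdonald basis `P_λ(x;q,t)` (obtained from the Schur basis by
Gram–Schmidt orthogonalization w.r.t. `⟨·,·⟩_{q,t}`): `P_λ` is unitriangular with respect to
the Schur functions of strictly dominated partitions, and the `P_λ` are pairwise orthogonal. -/
def IsMacdonaldBasis (q t : R) (P : Multiset ℕ+ → SymFn R) : Prop :=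
  (∀ lam, P lam - schur lam ∈
      Submodule.span R ((schur (R := R)) '' {mu | StrictDom mu lam})) ∧
  (∀ lam mu, lam ≠ mu → innerQT q t (P lam) (P mu) = 0)

/-- `Q_λ = P_λ / ⟨P_λ, P_λ⟩_{q,t}`. -/
def Qfam (q t : R) (P : Multiset ℕ+ → SymFn R) (lam : Multiset ℕ+) : SymFn R :=
  (innerQT q t (P lam) (P lam))⁻¹ • P lam

/-- The algebra endomorphism of `Λ_R` rescaling each power sum: `p_k ↦ g k · p_k`. -/
def scaleHom (g : ℕ+ → R) : SymFn R →ₐ[R] SymFn R :=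
  aeval fun k : ℕ+ => (C (g k) * X k : SymFn R)

/-- The modified Macdonald polynomial `Q'_λ(x;q,t) = Q_λ(((1-q)/(1-t))·x; q,t)`,
the image of `Q_λ` under `p_k ↦ ((1-q^k)/(1-t^k))·p_k`. -/
def Qprime (q t : R) (P : Multiset ℕ+ → SymFn R) (lam : Multiset ℕ+) : SymFn R :=
  scaleHom (fun k => (1 - q ^ (k : ℕ)) / (1 - t ^ (k : ℕ))) (Qfam q t P lam)

/-! ### Plethysm -/

/-- Plethysm by the power sum on the left: `p_l ∘ f`, the ring endomorphism `p_k ↦ p_{lk}`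
applied to `f`. -/
def plethP (l : ℕ+) : SymFn R →ₐ[R] SymFn R :=
  aeval fun k : ℕ+ => (X (l * k) : SymFn R)

/-- General plethysm `g ∘ f`: the algebra homomorphism in `g` sending `p_k` to `p_k ∘ f`. -/
def pleth (g f : SymFn R) : SymFn R :=
  aeval (fun k : ℕ+ => plethP k f) g

/-! ### Cells of a partition: arms, legs, the constants `c_μ`, `c'_μ` and `n(μ)` -/

/-- Arm length of the (0-indexed) cell `(i,j)` of `λ`: `λ_i - j - 1`. -/
def armM (lam : Multiset ℕ+) (i j : ℕ) : ℕ := (descParts lam).getD i 0 - (j + 1)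

/-- Leg length of the (0-indexed) cell `(i,j)` of `λ`: the number of cells below it
in the same column. -/
def legM (lam : Multiset ℕ+) (i j : ℕ) : ℕ :=
  ((List.range (descParts lam).length).filter
    (fun i' => decide (i < i') && decide (j < (descParts lam).getD i' 0))).length

/-- Product of a quantity over all cells of the partition `λ`. -/
def cellProd {S : Type} [CommMonoid S] (lam : Multiset ℕ+) (f : ℕ → ℕ → S) : S :=
  ∏ i ∈ Finset.range (descParts lam).length,
    ∏ j ∈ Finset.range ((descParts lam).getD i 0), f i j

/-- `c_μ(q,t) = ∏_{s∈μ} (1 - q^{a(s)} t^{l(s)+1})`. -/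
def cLow (q t : R) (lam : Multiset ℕ+) : R :=
  cellProd lam fun i j => 1 - q ^ (armM lam i j) * t ^ (legM lam i j + 1)

/-- `c'_μ(q,t) = ∏_{s∈μ} (1 - q^{a(s)+1} t^{l(s)})`. -/
def cUp (q t : R) (lam : Multiset ℕ+) : R :=
  cellProd lam fun i j => 1 - q ^ (armM lam i j + 1) * t ^ (legM lam i j)

/-- `n(λ) = ∑ (i-1)·λ_i`. -/
def nInv (lam : Multiset ℕ+) : ℕ :=
  ∑ i ∈ Finset.range (descParts lam).length, i * (descParts lam).getD i 0

/-- The modified Macdonald polynomial of Haglund–Haiman–Loehr,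
`H̃_μ(x;q,t) = t^{n(μ)} J_μ(x/(1-t⁻¹); q, t⁻¹)`, where `J_μ(x;q,t) = c_μ(q,t) P_μ(x;q,t)`
and `Pinv` is the Macdonald basis at parameters `(q, t⁻¹)`. -/
def Htilde (q t : R) (Pinv : Multiset ℕ+ → SymFn R) (lam : Multiset ℕ+) : SymFn R :=
  C (t ^ nInv lam) *
    scaleHom (fun k => (1 - (t⁻¹) ^ (k : ℕ))⁻¹) (C (cLow q t⁻¹ lam) * Pinv lam)

/-! ### Cyclic characters -/

/-- The Ramanujan (Von Sterneck) sum `c(j,d)`: the sum of the `j`-th powers of the primitive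
`d`-th roots of unity (computed in the domain `R`). -/
def cRam [IsDomain R] (j d : ℕ) : R := ∑ z ∈ primitiveRoots d R, z ^ j

/-- The Frobenius characteristic `l_k^{(j)} = (1/k) ∑_{d ∣ k} c(j,d) p_d^{k/d}` of the
representation of `S_k` induced from the `j`-th character of the cyclic subgroup generated
by a `k`-cycle. -/
def lchar [IsDomain R] (k j : ℕ) : SymFn R :=
  ((k : R))⁻¹ • ∑ d ∈ Nat.divisors k, (cRam (R := R) j d) • ((pN (R := R) d) ^ (k / d))

end Core

/-! ### Specialization `t = ζ` and evaluation maps -/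

/-- Evaluation of a rational function in `t` over `ℂ(q)` at a point `c : ℂ(q)`. -/
def evalT (c : KK) (x : FF) : KK := RatFunc.eval (RingHom.id KK) c x

/-- Coefficientwise specialization `t = c` of a symmetric function over `ℂ(q,t)`. -/
def specT (c : KK) (f : SymFn FF) : SymFn KK :=
  ∑ m ∈ f.support, MvPolynomial.monomial m (evalT c (MvPolynomial.coeff m f))

/-- Evaluation `f ↦ f(1, ζ, ζ², …, ζ^{l-1}; q, ζ)`: substitute the finite alphabet
`x_i = ζ^{i-1}` (`1 ≤ i ≤ l`) and then specialize `t = ζ`. -/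
def macEvalRoots (l : ℕ) (z : ℂ) (f : SymFn FF) : KK :=
  evalT (RatFunc.C z)
    ((aeval fun k : ℕ+ =>
        ∑ i ∈ Finset.range l, (RatFunc.C (RatFunc.C z) : FF) ^ (i * (k : ℕ))) f)

/-- Evaluation of a symmetric function over `ℂ(q,t)` at the finite alphabet
`(1, t, t², …, t^{l-1})`. -/
def evalAlphT (l : ℕ) : SymFn FF →ₐ[FF] FF :=
  aeval fun k : ℕ+ => ∑ i ∈ Finset.range l, tF ^ (i * (k : ℕ))

/-- Congruence to `0` modulo the cyclotomic polynomial `Φ_l(t)` for a rational function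
in `t`: `x = Φ_l(t) · (a/b)` with `b` coprime to `Φ_l`. -/
def CongrModPhi (l : ℕ) (x : FF) : Prop :=
  ∃ a b : Polynomial KK, IsCoprime b (Polynomial.cyclotomic l KK) ∧
    x = algebraMap (Polynomial KK) FF (Polynomial.cyclotomic l KK) *
      (algebraMap (Polynomial KK) FF a / algebraMap (Polynomial KK) FF b)

/-- The finite set of all partitions of `n`, as multisets of positive integers. -/
def partitionsOf (n : ℕ) : Finset (Multiset ℕ+) :=
  Finset.univ.image fun pi : Nat.Partition n =>
    pi.parts.attach.map fun a => (⟨a.1, pi.parts_pos a.2⟩ : ℕ+)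

end MacdonaldPreliminaries

open MvPolynomial
noncomputable section
namespace QR

section Hgen
set_option linter.unusedSectionVars false
variable {S : Type} [CommRing S] [Algebra ℚ S]

/-- The image of `h_n` under the specialization `p_k ↦ c k`. -/
def hh (c : ℕ+ → S) (n : ℕ) : S := aeval c (hsym (R := ℚ) n)

@[simp] lemma hh_zero (c : ℕ+ → S) : hh c 0 = 1 := by
  simp [hh, hsym]

lemma hh_rec (c : ℕ+ → S) (n : ℕ) :
    ((n : S) + 1) * hh c (n + 1) =
      ∑ i ∈ Finset.range (n + 1), c (Nat.succPNat i) * hh c (n - i) := by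
  have h : ((n : ℚ) + 1) ≠ 0 := by positivity
  unfold hh
  rw [hsym]
  rw [map_smul, Algebra.smul_def, ← mul_assoc]
  have : ((n : S) + 1) = algebraMap ℚ S ((n : ℚ) + 1) := by simp
  rw [this, ← map_mul, mul_inv_cancel₀ h, map_one, one_mul, map_sum]
  refine Finset.sum_congr rfl fun i _ => ?_
  rw [map_mul]
  exact congrArg (· * _) (aeval_X c (Nat.succPNat i))

lemma cancel_nat {a b : S} (n : ℕ) (h : ((n : S) + 1) * a = ((n : S) + 1) * b) : a = b := by
  have h0 : ((n : ℚ) + 1) ≠ 0 := by positivity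
  have : ((n : S) + 1) = algebraMap ℚ S ((n : ℚ) + 1) := by simp
  rw [this] at h
  have h2 := congrArg (fun x => algebraMap ℚ S (((n : ℚ) + 1)⁻¹) * x) h
  simpa [← mul_assoc, ← map_mul, inv_mul_cancel₀ h0, -map_add, -map_inv₀] using h2

lemma hh_unique (c : ℕ+ → S) (a : ℕ → S) (h0 : a 0 = 1)
    (h : ∀ n : ℕ, ((n : S) + 1) * a (n + 1) =
      ∑ i ∈ Finset.range (n + 1), c (Nat.succPNat i) * a (n - i)) (n : ℕ) :
    a n = hh c n := by
  induction n using Nat.strong_induction_on with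
  | _ n ih =>
    cases n with
    | zero => simp [h0]
    | succ n =>
      apply cancel_nat n
      rw [h, hh_rec]
      apply Finset.sum_congr rfl
      intro i hi
      rw [ih (n - i) (by omega)]

lemma hh_map {S' : Type} [CommRing S'] [Algebra ℚ S'] (f : S →+* S') (c : ℕ+ → S) (n : ℕ) :
    f (hh c n) = hh (fun k => f (c k)) n := by
  apply hh_unique _ (fun n => f (hh c n))
  · simp
  · intro n
    have := congrArg f (hh_rec c n)
    simpa using this

/-- The generating series. -/
def EE (c : ℕ+ → S) : PowerSeries S := PowerSeries.mk (hh c)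

/-- power sum generating series -/
def PP (c : ℕ+ → S) : PowerSeries S :=
  PowerSeries.mk fun n => if 0 < n then c (Nat.toPNat' n) else 0

lemma PP_EE_coeff (c : ℕ+ → S) (a : ℕ → S) (n : ℕ) :
    PowerSeries.coeff (n + 1) (PP c * PowerSeries.mk a) =
      ∑ i ∈ Finset.range (n + 1), c (Nat.succPNat i) * a (n - i) := by
  rw [PowerSeries.coeff_mul, Finset.Nat.sum_antidiagonal_eq_sum_range_succ_mk,
    Finset.sum_range_succ']
  simp [PP]
  rfl

lemma EE_deriv (c : ℕ+ → S) :
    PowerSeries.X * PowerSeries.derivative S (EE c) = PP c * EE c := by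
  ext n
  cases n with
  | zero => simp [PP]
  | succ n =>
    rw [EE, PP_EE_coeff, ← hh_rec, mul_comm, PowerSeries.coeff_succ_mul_X]
    simp [PowerSeries.coeff_derivative, mul_comm]

lemma EE_unique (c : ℕ+ → S) (F : PowerSeries S) (h0 : PowerSeries.constantCoeff F = 1)
    (h : PowerSeries.X * PowerSeries.derivative S F = PP c * F) : F = EE c := by
  ext n
  rw [EE, PowerSeries.coeff_mk]
  apply hh_unique c (fun n => PowerSeries.coeff n F)
  · simpa using h0
  · intro n
    have := congrArg (PowerSeries.coeff (n + 1)) h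
    rw [mul_comm, PowerSeries.coeff_succ_mul_X] at this
    rw [show F = PowerSeries.mk (fun n => PowerSeries.coeff n F) by ext; simp, PP_EE_coeff] at this
    rw [← this]
    simp [PowerSeries.coeff_derivative, mul_comm]

lemma EE_const (c : ℕ+ → S) : PowerSeries.constantCoeff (EE c) = 1 := by
  rw [← PowerSeries.coeff_zero_eq_constantCoeff_apply, EE, PowerSeries.coeff_mk, hh_zero]

lemma EE_add (c d : ℕ+ → S) : EE (fun k => c k + d k) = EE c * EE d := by
  symm
  apply EE_unique
  · rw [map_mul, EE_const, EE_const, one_mul]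
  · rw [Derivation.leibniz, mul_add]
    simp only [smul_eq_mul]
    have h1 := EE_deriv c
    have h2 := EE_deriv d
    have : PP (fun k => c k + d k) = PP c + PP d := by
      ext n
      simp only [PP, PowerSeries.coeff_mk, map_add]
      split_ifs <;> simp
    rw [this]
    linear_combination EE d * h1 + EE c * h2

lemma hh_add (c d : ℕ+ → S) (n : ℕ) : hh (fun k => c k + d k) n =
    ∑ i ∈ Finset.range (n + 1), hh c i * hh d (n - i) := by
  have := congrArg (PowerSeries.coeff n) (EE_add c d)
  rw [PowerSeries.coeff_mul, Finset.Nat.sum_antidiagonal_eq_sum_range_succ_mk] at this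
  simpa [EE] using this

lemma hh_pow (a : S) (n : ℕ) : hh (fun k : ℕ+ => a ^ (k : ℕ)) n = a ^ n := by
  symm
  apply hh_unique _ (fun n => a ^ n)
  · simp
  · intro n
    rw [Finset.sum_congr rfl (g := fun _ => a ^ (n + 1))]
    · simp
    · intro i hi
      have : i ≤ n := by simpa [Nat.lt_succ_iff] using hi
      simp only [Nat.succPNat_coe, Nat.succ_eq_add_one]
      rw [← pow_add]
      congr 1; omega

lemma hh_scale (a : S) (c : ℕ+ → S) (n : ℕ) :
    hh (fun k : ℕ+ => a ^ (k : ℕ) * c k) n = a ^ n * hh c n := by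
  symm
  apply hh_unique _ (fun n => a ^ n * hh c n)
  · simp
  · intro n
    rw [mul_left_comm, hh_rec, Finset.mul_sum]
    apply Finset.sum_congr rfl
    intro i hi
    have : i ≤ n := by simpa [Nat.lt_succ_iff] using hi
    simp only [Nat.succPNat_coe, Nat.succ_eq_add_one]
    have : a ^ (n + 1) = a ^ (i + 1) * a ^ (n - i) := by
      rw [← pow_add]; congr 1; omega
    rw [this]; ring

lemma hh_zero_fun (n : ℕ) : hh (fun _ : ℕ+ => (0 : S)) n = if n = 0 then 1 else 0 := by
  cases n with
  | zero => simp
  | succ n =>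
    apply cancel_nat n
    rw [hh_rec]; simp

lemma hh_add_pow (c : ℕ+ → S) (a : S) (n : ℕ) :
    hh (fun k => c k + a ^ (k : ℕ)) (n + 1) =
      hh c (n + 1) + a * hh (fun k => c k + a ^ (k : ℕ)) n := by
  rw [hh_add, hh_add, Finset.sum_range_succ, Finset.mul_sum, add_comm]
  congr 1
  · simp
  · apply Finset.sum_congr rfl
    intro i hi
    have : i ≤ n := by simpa [Nat.lt_succ_iff] using hi
    rw [hh_pow, hh_pow, show n + 1 - i = (n - i) + 1 by omega]; ring

/-- integer-index version -/
def hhz (c : ℕ+ → S) (z : ℤ) : S := if 0 ≤ z then hh c z.toNat else 0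

lemma hhz_nat (c : ℕ+ → S) (n : ℕ) : hhz c n = hh c n := by simp [hhz]

lemma hhz_neg (c : ℕ+ → S) {z : ℤ} (h : z < 0) : hhz c z = 0 := by
  simp [hhz, not_le.mpr h]

lemma hhz_add_pow (c : ℕ+ → S) (a : S) (z : ℤ) :
    hhz (fun k => c k + a ^ (k : ℕ)) z =
      hhz c z + a * hhz (fun k => c k + a ^ (k : ℕ)) (z - 1) := by
  rcases lt_trichotomy z 0 with h | h | h
  · rw [hhz_neg _ h, hhz_neg _ h, hhz_neg _ (by omega)]; simp
  · subst h
    rw [hhz_neg _ (show (0 : ℤ) - 1 < 0 by norm_num)]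
    simp [hhz]
  · obtain ⟨n, rfl⟩ : ∃ n : ℕ, z = n + 1 := ⟨(z - 1).toNat, by omega⟩
    rw [show ((n : ℤ) + 1 - 1) = n by ring, show ((n : ℤ) + 1) = ((n + 1 : ℕ) : ℤ) by push_cast; rfl,
      hhz_nat, hhz_nat, hhz_nat, hh_add_pow]

lemma hhz_map {S' : Type} [CommRing S'] [Algebra ℚ S'] (f : S →+* S') (c : ℕ+ → S) (z : ℤ) :
    f (hhz c z) = hhz (fun k => f (c k)) z := by
  unfold hhz; split_ifs <;> simp [hh_map]

end Hgen

end QR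
end

open MvPolynomial
noncomputable section
namespace QR
set_option linter.unusedSectionVars false
set_option linter.unusedSimpArgs false

section Dt
variable {T : Type} [CommRing T] {N : ℕ}

/-- Determinant of a family of vectors (the first `N` of them). -/
def dt (W : ℕ → (Fin N → T)) : T := Matrix.detRowAlternating (fun c : Fin N => W c)

lemma dt_upd (W : ℕ → (Fin N → T)) (j : ℕ) (h : j < N) (y : Fin N → T) :
    dt (Function.update W j y) =
      Matrix.detRowAlternating (Function.update (fun c : Fin N => W c) ⟨j, h⟩ y) := by
  unfold dt
  congr 1
  funext c
  by_cases hc : (c : ℕ) = j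
  · have : c = ⟨j, h⟩ := Fin.ext hc
    subst this; simp
  · have : c ≠ ⟨j, h⟩ := fun e => hc (by rw [e])
    simp [Function.update_of_ne hc, Function.update_of_ne this]

lemma dt_add (W : ℕ → (Fin N → T)) {j : ℕ} (h : j < N) (a b : Fin N → T) :
    dt (Function.update W j (a + b)) = dt (Function.update W j a) + dt (Function.update W j b) := by
  rw [dt_upd W j h, dt_upd W j h, dt_upd W j h, AlternatingMap.map_update_add]

lemma dt_smul (W : ℕ → (Fin N → T)) {j : ℕ} (h : j < N) (r : T) (a : Fin N → T) :
    dt (Function.update W j (r • a)) = r * dt (Function.update W j a) := by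
  rw [dt_upd W j h, dt_upd W j h, AlternatingMap.map_update_smul, smul_eq_mul]

lemma dt_eq_zero (W : ℕ → (Fin N → T)) {a b : ℕ} (ha : a < N) (hb : b < N) (hab : a ≠ b)
    (h : W a = W b) : dt W = 0 := by
  unfold dt
  exact AlternatingMap.map_eq_zero_of_eq _ _ (i := ⟨a, ha⟩) (j := ⟨b, hb⟩) (by simpa using h)
    (fun e => hab (by simpa using congrArg Fin.val e))

lemma dt_swap (W : ℕ → (Fin N → T)) {a b : ℕ} (ha : a < N) (hb : b < N) (hab : a ≠ b)
    (p q : Fin N → T) :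
    dt (Function.update (Function.update W a p) b q) =
      - dt (Function.update (Function.update W a q) b p) := by
  have h0 : dt (Function.update (Function.update W a (p + q)) b (p + q)) = 0 :=
    dt_eq_zero _ ha hb hab (by simp [Function.update_of_ne hab])
  have h1 : dt (Function.update (Function.update W a p) b p) = 0 :=
    dt_eq_zero _ ha hb hab (by simp [Function.update_of_ne hab])
  have h2 : dt (Function.update (Function.update W a q) b q) = 0 :=
    dt_eq_zero _ ha hb hab (by simp [Function.update_of_ne hab])
  rw [dt_add _ hb] at h0
  have f1 : ∀ y z : Fin N → T, Function.update (Function.update W a y) b z =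
      Function.update (Function.update W b z) a y := fun y z => Function.update_comm hab _ _ W
  rw [f1, f1, dt_add _ ha, dt_add _ ha, ← f1, ← f1, ← f1, ← f1, h1, h2] at h0
  linear_combination h0

/-- first `j` entries from `v`, the rest from `u`. -/
def mix (j : ℕ) (v u : ℕ → (Fin N → T)) : ℕ → (Fin N → T) := fun c => if c < j then v c else u c

lemma mix_succ (j : ℕ) (v u : ℕ → (Fin N → T)) :
    mix (j + 1) v u = Function.update (mix j v u) j (v j) := by
  funext c
  by_cases h : c = j
  · subst h; simp [mix]
  · rw [Function.update_of_ne h]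
    unfold mix
    split_ifs <;> first | rfl | omega

lemma mix_upd (j : ℕ) (v u : ℕ → (Fin N → T)) (z : Fin N → T) :
    mix j v (Function.update u j z) = Function.update (mix j v u) j z := by
  funext c
  by_cases h : c = j
  · subst h; simp [mix]
  · rw [Function.update_of_ne h]
    unfold mix
    rw [Function.update_of_ne h]

lemma dt_main (v x : ℕ → (Fin N → T)) (w s : T)
    (hx : ∀ j, x (j + 1) = w • x j + (v (j + 1) - (w * s) • v j)) (j : ℕ) (hj : j ≤ N) :
    ∀ u : ℕ → (Fin N → T), dt (mix j x u) = dt (mix j v u) +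
      ∑ c ∈ Finset.range j, s ^ c * dt (Function.update (mix j v u) c (x c - v c)) := by
  induction j with
  | zero =>
    intro u
    have : mix 0 x u = mix 0 v u := by funext c; simp [mix]
    simp [this]
  | succ j ih =>
    intro u
    cases j with
    | zero =>
      simp only [zero_add, Finset.range_one, Finset.sum_singleton, pow_zero, one_mul]
      rw [mix_succ, mix_succ, Function.update_idem]
      have : mix 0 x u = mix 0 v u := by funext c; simp [mix]
      rw [this, ← dt_add _ (by omega)]
      congr 2; abel
    | succ j =>
      have hj' : j + 1 < N := by omega
      have ih := ih (by omega)
      set z := v (j + 1) - (w * s) • v j with hz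
      have e1 : dt (mix (j + 1 + 1) x u) = dt (mix (j + 1) x (Function.update u (j + 1) z)) := by
        rw [mix_succ, mix_upd, hx, dt_add _ hj', dt_smul _ hj']
        rw [dt_eq_zero _ (a := j) (b := j + 1) (by omega) hj' (by omega)]
        · ring
        · simp [mix]
      rw [e1, ih, mix_upd]
      have key : ∀ W : ℕ → (Fin N → T), dt (Function.update W (j + 1) z) =
          dt (Function.update W (j + 1) (v (j + 1))) -
            (w * s) * dt (Function.update W (j + 1) (v j)) := by
        intro W
        rw [hz, sub_eq_add_neg, ← neg_smul, dt_add _ hj', dt_smul _ hj']; ring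
      have e2 : dt (Function.update (mix (j + 1) v u) (j + 1) (v j)) = 0 :=
        dt_eq_zero _ (a := j) (b := j + 1) (by omega) hj' (by omega) (by simp [mix])
      rw [key, e2, mix_succ (j + 1), Finset.sum_range_succ _ (j + 1),
        Finset.sum_range_succ, Finset.sum_range_succ _ j]
      have e3 : ∀ c ∈ Finset.range j,
          s ^ c * dt (Function.update (Function.update (mix (j + 1) v u) (j + 1) z) c (x c - v c)) =
          s ^ c * dt (Function.update
            (Function.update (mix (j + 1) v u) (j + 1) (v (j + 1))) c (x c - v c)) := by
        intro c hc
        have hc : c < j := by simpa using hc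
        have hne : j + 1 ≠ c := by omega
        rw [Function.update_comm hne, Function.update_comm hne, key]
        rw [dt_eq_zero (Function.update (Function.update _ _ _) _ (v j)) (a := j) (b := j + 1)
          (by omega) hj' (by omega)]
        · ring
        · have : j ≠ c := by omega
          simp [mix, Function.update_of_ne this]
      rw [Finset.sum_congr rfl e3]
      have hne : j + 1 ≠ j := by omega
      have f2 : ∀ y z : Fin N → T,
          Function.update (Function.update (mix (j + 1) v u) (j + 1) y) j z =
          Function.update (Function.update (mix (j + 1) v u) j z) (j + 1) y :=
        fun y z => Function.update_comm hne _ _ _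
      rw [f2, key, f2]
      have e4 : dt (Function.update (Function.update (mix (j + 1) v u) j (x j - v j)) (j + 1) (v j))
          = - dt (Function.update (mix (j + 1) v u) (j + 1) (x j - v j)) := by
        rw [dt_swap _ (by omega) hj' hne.symm]
        congr 3
        funext c
        by_cases h : c = j
        · subst h; simp [mix]
        · rw [Function.update_of_ne h]
      rw [e4, Function.update_idem]
      have e5 : x (j + 1) - v (j + 1) = w • (x j - v j) + (w * (1 - s)) • v j := by
        rw [hx]; module
      rw [e5, dt_add _ hj', dt_smul _ hj', dt_smul _ hj', e2]
      ring

lemma dt_full (v x : ℕ → (Fin N → T)) (w s : T)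
    (hx : ∀ j, x (j + 1) = w • x j + (v (j + 1) - (w * s) • v j)) :
    dt x = dt v + ∑ c ∈ Finset.range N, s ^ c * dt (Function.update v c (x c - v c)) := by
  have hm : ∀ y : ℕ → (Fin N → T), dt (mix N y v) = dt y := by
    intro y
    unfold dt
    congr 1
    funext c
    simp [mix]
  have := dt_main v x w s hx N le_rfl v
  rw [hm] at this
  rw [this]
  have e : mix N v v = v := by funext c; simp [mix]
  rw [e]

end Dt

section Op
variable {R : Type} [CommRing R] [Algebra ℚ R]

/-- the series coefficients of `H(qu)/H(u)` -/
def AA (q : R) (n : ℕ) : MvPolynomial ℕ+ R :=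
  hh (fun k : ℕ+ => C (q ^ (k : ℕ) - 1) * X k) n

/-- Translation homomorphism. -/
def tau (s : R) : MvPolynomial ℕ+ R →ₐ[R] Polynomial (MvPolynomial ℕ+ R) :=
  aeval fun k : ℕ+ => Polynomial.C (X k) +
    Polynomial.C (C (1 - s ^ (k : ℕ))) * Polynomial.X ^ (k : ℕ)

/-- Linear functional `w ^ n ↦ A n`. -/
def evA (A : ℕ → MvPolynomial ℕ+ R) :
    Polynomial (MvPolynomial ℕ+ R) →ₗ[MvPolynomial ℕ+ R] MvPolynomial ℕ+ R :=
  Polynomial.lsum fun n => (A n) • LinearMap.id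

lemma evA_C_mul_X_pow (A : ℕ → MvPolynomial ℕ+ R) (a : MvPolynomial ℕ+ R) (n : ℕ) :
    evA A (Polynomial.C a * Polynomial.X ^ n) = A n * a := by
  simp [evA, Polynomial.C_mul_X_pow_eq_monomial]

lemma evA_C (A : ℕ → MvPolynomial ℕ+ R) (a : MvPolynomial ℕ+ R) :
    evA A (Polynomial.C a) = A 0 * a := by
  simpa using evA_C_mul_X_pow A a 0

lemma evA_eq (A : ℕ → MvPolynomial ℕ+ R) (p : Polynomial (MvPolynomial ℕ+ R)) (N : ℕ)
    (h : p.natDegree < N) : evA A p = ∑ n ∈ Finset.range N, A n * p.coeff n := by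
  conv_lhs => rw [Polynomial.as_sum_range_C_mul_X_pow' p h]
  rw [map_sum]
  exact Finset.sum_congr rfl fun n _ => evA_C_mul_X_pow _ _ _

/-- The operator. -/
def Dop (q s : R) : MvPolynomial ℕ+ R →ₗ[R] MvPolynomial ℕ+ R :=
  (evA (AA q)).restrictScalars R ∘ₗ (tau s).toLinearMap

lemma Dop_apply (q s : R) (f : MvPolynomial ℕ+ R) : Dop q s f = evA (AA q) (tau s f) := rfl

lemma tau_hz (s : R) (z : ℤ) :
    tau s (hhz X z) = Polynomial.X * tau s (hhz X (z - 1)) + (Polynomial.C (hhz X z)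
      - (Polynomial.X * Polynomial.C (C s)) * Polynomial.C (hhz X (z - 1))) := by
  set c : ℕ+ → Polynomial (MvPolynomial ℕ+ R) := fun k =>
    Polynomial.C (X k) - (Polynomial.X * Polynomial.C (C s)) ^ (k : ℕ) with hc
  have h1 : ∀ z, tau s (hhz X z) = hhz (fun k => c k + Polynomial.X ^ (k : ℕ)) z := by
    intro z
    have := hhz_map (tau s).toRingHom X z
    refine this.trans ?_
    congr 1
    funext k
    simp [tau, hc]
    ring
  have h2 : ∀ z, Polynomial.C (hhz (X : ℕ+ → MvPolynomial ℕ+ R) z) =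
      hhz (fun k => c k + (Polynomial.X * Polynomial.C (C s)) ^ (k : ℕ)) z := by
    intro z
    have := hhz_map (Polynomial.C (R := MvPolynomial ℕ+ R)) X z
    refine this.trans ?_
    congr 1
    funext k
    simp [hc]
  rw [h1, h1, h2, h2, hhz_add_pow c Polynomial.X z, hhz_add_pow c (Polynomial.X * Polynomial.C (C s)) z]
  ring

lemma tau_h (s : R) (n : ℕ) :
    tau s (hh X n) - Polynomial.C (hh X n) = Polynomial.C (C (1 - s)) *
      ∑ k ∈ Finset.range n, Polynomial.C (hh X (n - (k + 1))) * Polynomial.X ^ (k + 1) := by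
  induction n with
  | zero => simp
  | succ n ih =>
    have h := tau_hz s ((n + 1 : ℕ) : ℤ)
    rw [show (((n + 1 : ℕ) : ℤ) - 1) = (n : ℤ) by push_cast; ring, hhz_nat, hhz_nat] at h
    rw [h, Finset.sum_range_succ', sub_eq_iff_eq_add.mp ih]
    simp only [Nat.succ_eq_add_one, Nat.add_sub_add_right, Finset.mul_sum, mul_add,
      C_sub, Polynomial.C_sub, C_1, Polynomial.C_1, Finset.sum_mul]
    simp only [zero_add, pow_one, Nat.sub_zero]
    rw [Finset.sum_congr rfl (fun k _ => show (1 - Polynomial.C (C s)) *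
      (Polynomial.C (hh X (n - (k + 1))) * Polynomial.X ^ (k + 1 + 1)) =
      Polynomial.X * ((1 - Polynomial.C (C s)) *
      (Polynomial.C (hh X (n - (k + 1))) * Polynomial.X ^ (k + 1))) by ring)]
    ring

lemma AA_sum (q : R) (n : ℕ) :
    ∑ k ∈ Finset.range (n + 1), AA q k * hh X (n - k) = C (q ^ n) * hh X n := by
  have := hh_add (fun k : ℕ+ => C (q ^ (k : ℕ) - 1) * X k) (X : ℕ+ → MvPolynomial ℕ+ R) n
  unfold AA
  rw [← this, C_pow, ← hh_scale]
  congr 1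
  funext k
  simp; ring

lemma AA_zero (q : R) : AA q 0 = 1 := by simp [AA]

lemma evA_y (q s : R) (n : ℕ) :
    evA (AA q) (tau s (hh X n) - Polynomial.C (hh X n)) =
      C ((1 - s) * (q ^ n - 1)) * hh X n := by
  rw [tau_h, Polynomial.C_mul', map_smul, map_sum]
  simp only [evA_C_mul_X_pow]
  have := AA_sum q n
  rw [Finset.sum_range_succ', AA_zero] at this
  rw [smul_eq_mul, eq_sub_of_add_eq this]
  simp
  ring

end Op
end QR
end

open MvPolynomial
noncomputable section
namespace QR
set_option linter.unusedSectionVars false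

section Dt2
variable {T : Type} [CommRing T] {N : ℕ}

lemma dt_expand (W : ℕ → (Fin N → T)) {c : ℕ} (h : c < N) (y : Fin N → T) :
    dt (Function.update W c y) =
      ∑ i, y i * dt (Function.update W c (Pi.single i 1)) := by
  have : y = ∑ i, y i • (Pi.single i 1 : Fin N → T) := by
    funext j
    simp [Finset.sum_apply, Pi.single_apply]
  conv_lhs => rw [this]
  have gen : ∀ (S : Finset (Fin N)), dt (Function.update W c (∑ i ∈ S, y i • (Pi.single i 1 : Fin N → T)))
      = ∑ i ∈ S, y i * dt (Function.update W c (Pi.single i 1)) := by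
    intro S
    induction S using Finset.induction_on with
    | empty =>
      have := dt_smul W h (0 : T) 0
      simpa using this
    | insert a S ha ih =>
      rw [Finset.sum_insert ha, Finset.sum_insert ha, dt_add _ h, dt_smul _ h, ih]
  exact gen _

lemma dt_map {T' : Type} [CommRing T'] (f : T →+* T') (W : ℕ → (Fin N → T)) :
    f (dt W) = dt (fun c i => f (W c i)) := by
  exact RingHom.map_det f (Matrix.of fun (c : Fin N) i => W c i)

lemma dt_leibniz (W : ℕ → (Fin N → T)) :
    dt W = ∑ σ : Equiv.Perm (Fin N), (((Equiv.Perm.sign σ : ℤ)) : T) * ∏ i, W (σ i) i := by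
  exact Matrix.det_apply' (Matrix.of fun (c : Fin N) i => W c i)

end Dt2

section JTs
variable {R : Type} [CommRing R] [Algebra ℚ R]

/-- Jacobi–Trudi determinant. -/
def JT (N : ℕ) (α : ℕ → ℤ) : MvPolynomial ℕ+ R :=
  Matrix.det (Matrix.of fun i j : Fin N => hhz X (α i + (j : ℤ) - (i : ℤ)))

lemma JT_dt (N : ℕ) (α : ℕ → ℤ) : JT (R := R) N α =
    dt (N := N) (fun c i => hhz X (α i + (c : ℤ) - (i : ℤ))) := by
  unfold JT
  rw [← Matrix.det_transpose]; rfl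

lemma evA_dt (A : ℕ → MvPolynomial ℕ+ R) {N : ℕ} (W : ℕ → (Fin N → MvPolynomial ℕ+ R)) {c : ℕ}
    (h : c < N) (y : Fin N → Polynomial (MvPolynomial ℕ+ R)) :
    evA A (dt (Function.update (fun c i => Polynomial.C (W c i)) c y)) =
      dt (Function.update W c (fun i => evA A (y i))) := by
  rw [dt_expand _ h, dt_expand _ h, map_sum]
  refine Finset.sum_congr rfl fun i _ => ?_
  have : dt (Function.update (fun c i => Polynomial.C (W c i)) c (Pi.single i 1)) =
      Polynomial.C (dt (Function.update W c (Pi.single i 1))) := by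
    rw [dt_map]
    congr 1
    funext c' j
    by_cases hc : c' = c
    · subst hc; simp [Pi.single_apply, apply_ite Polynomial.C]
    · simp [Function.update_of_ne hc]
  rw [this, mul_comm, Polynomial.C_mul', map_smul, smul_eq_mul, mul_comm]

/-- generalized eigenvalue -/
def ev (q s : R) {N : ℕ} (b : Fin N → ℤ) (c : Fin N → ℕ) : R :=
  1 + (1 - s) * ∑ i, s ^ (c i) * (q ^ (b i).toNat - 1)

lemma evA_yz (q s : R) (z : ℤ) :
    evA (AA q) (tau s (hhz X z) - Polynomial.C (hhz X z)) =
      C ((1 - s) * (q ^ z.toNat - 1)) * hhz X z := by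
  by_cases h : 0 ≤ z
  · obtain ⟨n, rfl⟩ := Int.eq_ofNat_of_zero_le h
    rw [hhz_nat, evA_y]; simp
  · rw [hhz_neg _ (by omega)]; simp

lemma JT_leibniz (N : ℕ) (α : ℕ → ℤ) : JT (R := R) N α =
    ∑ σ : Equiv.Perm (Fin N), (((Equiv.Perm.sign σ : ℤ)) : MvPolynomial ℕ+ R) *
      ∏ i : Fin N, hhz X (α i + (σ i : ℤ) - (i : ℤ)) := by
  rw [JT_dt, dt_leibniz]

lemma Dop_JT (q s : R) (N : ℕ) (α : ℕ → ℤ) : Dop q s (JT N α) =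
    ∑ σ : Equiv.Perm (Fin N), (((Equiv.Perm.sign σ : ℤ)) : MvPolynomial ℕ+ R) *
      (C (ev q s (fun i => α i + (σ i : ℤ) - (i : ℤ)) (fun i => (σ i : ℕ))) *
      ∏ i : Fin N, hhz X (α i + (σ i : ℤ) - (i : ℤ))) := by
  set v : ℕ → (Fin N → MvPolynomial ℕ+ R) := fun c i => hhz X (α i + (c : ℤ) - (i : ℤ)) with hv
  have h1 : tau s (JT N α) = dt (N := N) (fun c i => tau s (v c i)) := by
    rw [JT_dt]; exact dt_map (tau s).toRingHom _
  rw [Dop_apply, h1, dt_full (fun c i => Polynomial.C (v c i)) _ Polynomial.X (Polynomial.C (C s))]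
  · rw [map_add, map_sum]
    have h2 : ∀ c ∈ Finset.range N, evA (AA q) (Polynomial.C (C s) ^ c *
        dt (Function.update (fun c i => Polynomial.C (v c i)) c
        ((fun i => tau s (v c i)) - fun i => Polynomial.C (v c i)))) =
        ∑ σ : Equiv.Perm (Fin N), (((Equiv.Perm.sign σ : ℤ)) : MvPolynomial ℕ+ R) * 
          ((C (s ^ c) * ∏ i : Fin N, (if (σ i : ℕ) = c then
              C ((1 - s) * (q ^ (α i + (c : ℤ) - (i : ℤ)).toNat - 1)) else 1)) *
            ∏ i : Fin N, hhz X (α i + (σ i : ℤ) - (i : ℤ))) := by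
      intro c hc
      have hc : c < N := by simpa using hc
      rw [← Polynomial.C_pow, Polynomial.C_mul', map_smul, evA_dt _ _ hc, dt_leibniz,
        smul_eq_mul, Finset.mul_sum]
      refine Finset.sum_congr rfl fun σ _ => ?_
      rw [mul_left_comm]
      congr 1
      rw [mul_assoc, ← Finset.prod_mul_distrib, C_pow]
      congr 1
      refine Finset.prod_congr rfl fun i _ => ?_
      by_cases hi : (σ i : ℕ) = c
      · rw [hi, if_pos rfl]
        simp only [Function.update_self, Pi.sub_apply, hv]
        rw [evA_yz]
      · rw [if_neg hi, Function.update_of_ne hi, one_mul]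
    rw [Finset.sum_congr rfl h2, ← dt_map Polynomial.C, evA_C, AA_zero, one_mul, dt_leibniz,
      Finset.sum_comm, ← Finset.sum_add_distrib]
    refine Finset.sum_congr rfl fun σ _ => ?_
    rw [← Finset.mul_sum, ← mul_add, ← Finset.sum_mul]
    congr 1
    rw [← one_add_mul]
    congr 1
    rw [Finset.sum_range fun c => (C (s ^ c) * ∏ i : Fin N, (if (σ i : ℕ) = c then
              C ((1 - s) * (q ^ (α i + (c : ℤ) - (i : ℤ)).toNat - 1)) else 1) : MvPolynomial ℕ+ R),
      ← Equiv.sum_comp σ]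
    unfold ev
    rw [C_add, C_1, C_mul, map_sum, Finset.mul_sum]
    congr 1
    refine Finset.sum_congr rfl fun i _ => ?_
    rw [Finset.prod_eq_single i]
    · simp; ring
    · intro j _ hj
      rw [if_neg]
      intro e
      exact hj (σ.injective (Fin.ext e))
    · simp
  · intro j
    funext i
    simp only [Pi.add_apply, Pi.smul_apply, Pi.sub_apply, smul_eq_mul, hv]
    rw [tau_hz]
    have : α i + ((j + 1 : ℕ) : ℤ) - (i : ℤ) - 1 = α i + (j : ℤ) - (i : ℤ) := by push_cast; ring
    rw [this]

end JTs
end QR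
end

open MvPolynomial
noncomputable section
namespace QR
set_option linter.unusedSectionVars false

/-- the `i`-th part -/
def pt (mu : Multiset ℕ+) (i : ℕ) : ℕ := (descParts mu).getD i 0

lemma desc_perm (mu : Multiset ℕ+) :
    ((descParts mu : List ℕ) : Multiset ℕ) = mu.map (fun a : ℕ+ => (a : ℕ)) := by
  unfold descParts
  rw [← Multiset.coe_reverse]
  simp

lemma desc_len (mu : Multiset ℕ+) : (descParts mu).length = Multiset.card mu := by
  have := congrArg Multiset.card (desc_perm mu)
  simpa using this

lemma desc_sorted (mu : Multiset ℕ+) : (descParts mu).Pairwise (· ≥ ·) := by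
  unfold descParts
  rw [List.pairwise_reverse]
  exact Multiset.pairwise_sort _ _

lemma desc_pos (mu : Multiset ℕ+) (a : ℕ) (h : a ∈ descParts mu) : 0 < a := by
  have : a ∈ ((descParts mu : List ℕ) : Multiset ℕ) := h
  rw [desc_perm, Multiset.mem_map] at this
  obtain ⟨b, _, rfl⟩ := this
  exact b.pos

lemma desc_inj {mu nu : Multiset ℕ+} (h : descParts mu = descParts nu) : mu = nu := by
  have := desc_perm mu
  rw [h, desc_perm] at this
  exact (Multiset.map_injective PNat.coe_injective this).symm

lemma sum_take_getD (L : List ℕ) (k : ℕ) :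
    (L.take k).sum = ∑ i ∈ Finset.range k, L.getD i 0 := by
  induction L generalizing k with
  | nil => simp
  | cons a L ih =>
    cases k with
    | zero => simp
    | succ k => rw [Finset.sum_range_succ']; simp [ih]; ring

lemma pSum_eq (mu : Multiset ℕ+) (k : ℕ) : pSum mu k = ∑ i ∈ Finset.range k, pt mu i :=
  sum_take_getD _ _

lemma pSum_succ (mu : Multiset ℕ+) (k : ℕ) : pSum mu (k + 1) = pSum mu k + pt mu k := by
  rw [pSum_eq, pSum_eq, Finset.sum_range_succ]

lemma pt_zero_iff (mu : Multiset ℕ+) (i : ℕ) : pt mu i = 0 ↔ Multiset.card mu ≤ i := by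
  rw [← desc_len]
  unfold pt
  constructor
  · intro h
    by_contra hc
    have hc : i < (descParts mu).length := by omega
    rw [List.getD_eq_getElem _ _ hc] at h
    have := desc_pos mu _ (List.getElem_mem hc)
    omega
  · intro h
    exact List.getD_eq_default _ _ h

lemma pt_anti (mu : Multiset ℕ+) {i j : ℕ} (h : i ≤ j) : pt mu j ≤ pt mu i := by
  by_cases hj : j < (descParts mu).length
  · rcases h.eq_or_lt with rfl | h
    · rfl
    unfold pt
    rw [List.getD_eq_getElem _ _ hj, List.getD_eq_getElem _ _ (by omega)]
    exact List.pairwise_iff_getElem.mp (desc_sorted mu) i j (by omega) hj h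
  · have : pt mu j = 0 := (pt_zero_iff mu j).2 (by rw [← desc_len]; omega)
    omega

lemma wt_eq (mu : Multiset ℕ+) : wt mu = (descParts mu).sum := by
  unfold wt
  rw [← desc_perm]; simp

lemma pSum_wt (mu : Multiset ℕ+) {k : ℕ} (h : Multiset.card mu ≤ k) : pSum mu k = wt mu := by
  unfold pSum
  rw [List.take_of_length_le (by rw [desc_len]; exact h), wt_eq]

lemma pSum_mono (mu : Multiset ℕ+) {k j : ℕ} (h : k ≤ j) : pSum mu k ≤ pSum mu j := by
  rw [pSum_eq, pSum_eq]
  exact Finset.sum_le_sum_of_subset (by simpa using h)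

lemma pSum_le_wt (mu : Multiset ℕ+) (k : ℕ) : pSum mu k ≤ wt mu := by
  rw [← pSum_wt mu (le_max_right k (Multiset.card mu))]
  exact pSum_mono _ (le_max_left _ _)

lemma card_le_wt (mu : Multiset ℕ+) : Multiset.card mu ≤ wt mu := by
  unfold wt
  have := Multiset.card_nsmul_le_sum (s := mu.map fun a : ℕ+ => (a : ℕ)) (a := 1)
  simp only [Multiset.card_map, smul_eq_mul, mul_one] at this
  apply this
  intro x hx
  rw [Multiset.mem_map] at hx
  obtain ⟨b, _, rfl⟩ := hx
  exact b.pos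

lemma eq_of_pt {mu nu : Multiset ℕ+} (h : ∀ i, pt mu i = pt nu i) : mu = nu := by
  have hc : Multiset.card mu = Multiset.card nu := by
    apply le_antisymm
    · rw [← pt_zero_iff, h, pt_zero_iff]
    · rw [← pt_zero_iff, ← h, pt_zero_iff]
  apply desc_inj
  apply List.ext_getElem
  · rw [desc_len, desc_len, hc]
  · intro i h1 h2
    have := h i
    unfold pt at this
    rwa [List.getD_eq_getElem _ _ h1, List.getD_eq_getElem _ _ h2] at this

lemma eq_of_pSum {mu nu : Multiset ℕ+} (h : ∀ i, pSum mu i = pSum nu i) : mu = nu := by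
  apply eq_of_pt
  intro i
  have h1 := h (i + 1)
  rw [pSum_succ, pSum_succ, h i] at h1
  omega

/-- dominance order -/
def DomLE (mu nu : Multiset ℕ+) : Prop := wt mu = wt nu ∧ ∀ k, pSum mu k ≤ pSum nu k

lemma DomLE.refl (mu : Multiset ℕ+) : DomLE mu mu := ⟨rfl, fun _ => le_rfl⟩
lemma DomLE.trans {a b c : Multiset ℕ+} (h : DomLE a b) (h' : DomLE b c) : DomLE a c :=
  ⟨h.1.trans h'.1, fun k => (h.2 k).trans (h'.2 k)⟩
lemma DomLE.antisymm {a b : Multiset ℕ+} (h : DomLE a b) (h' : DomLE b a) : a = b :=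
  eq_of_pSum fun k => le_antisymm (h.2 k) (h'.2 k)

lemma strict_iff {a b : Multiset ℕ+} : StrictDom a b ↔ a ≠ b ∧ DomLE a b := Iff.rfl
lemma sle {a b : Multiset ℕ+} (h : StrictDom a b) : DomLE a b := h.2
lemma strict_trans_le {a b c : Multiset ℕ+} (h : StrictDom a b) (h' : DomLE b c) :
    StrictDom a c := by
  refine ⟨?_, (sle h).trans h'⟩
  rintro rfl
  exact h.1 ((sle h).antisymm h')
lemma strict_of_le_strict {a b c : Multiset ℕ+} (h : DomLE a b) (h' : StrictDom b c) :
    StrictDom a c := by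
  refine ⟨?_, h.trans (sle h')⟩
  rintro rfl
  exact h'.1 ((sle h').antisymm h)

/-- rank function -/
def rk (mu : Multiset ℕ+) : ℕ := ∑ k ∈ Finset.range (wt mu), pSum mu k

lemma rk_lt {a b : Multiset ℕ+} (h : StrictDom a b) : rk a < rk b := by
  unfold rk
  rw [← (sle h).1]
  apply Finset.sum_lt_sum (fun k _ => (sle h).2 k)
  by_contra hc
  push Not at hc
  apply h.1
  apply eq_of_pSum
  intro k
  by_cases hk : k < wt a
  · exact le_antisymm ((sle h).2 k) (hc k (by simpa using hk))
  · rw [pSum_wt a ((card_le_wt a).trans (by omega)), pSum_wt b ((card_le_wt b).trans (by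
      rw [← (sle h).1]; omega)), (sle h).1]

lemma rk_le (a : Multiset ℕ+) : rk a ≤ wt a * wt a := by
  unfold rk
  refine (Finset.sum_le_card_nsmul _ _ _ (fun k _ => pSum_le_wt a k)).trans ?_
  simp

/-- induction from small to large. -/
lemma dom_ind {p : Multiset ℕ+ → Prop} (h : ∀ a, (∀ b, StrictDom b a → p b) → p a) (a) : p a := by
  suffices ∀ n a, rk a ≤ n → p a from this _ a le_rfl
  intro n
  induction n with
  | zero =>
    intro a ha
    exact h a fun b hb => absurd (rk_lt hb) (by omega)
  | succ n ih =>
    intro a ha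
    exact h a fun b hb => ih b (by have := rk_lt hb; omega)

/-- induction from large to small. -/
lemma dom_ind' {p : Multiset ℕ+ → Prop} (h : ∀ a, (∀ b, StrictDom a b → p b) → p a) (a) : p a := by
  suffices ∀ n a, wt a * wt a ≤ rk a + n → p a from this (wt a * wt a) a (by omega)
  intro n
  induction n with
  | zero =>
    intro a ha
    refine h a fun b hb => absurd (rk_lt hb) ?_
    have := rk_le b
    rw [← (sle hb).1] at this
    omega
  | succ n ih =>
    intro a ha
    refine h a fun b hb => ih b ?_
    have := rk_lt hb
    rw [← (sle hb).1]
    omega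

/-- nonzero part of a multiset. -/
def ms (M : Multiset ℕ) : Multiset ℕ+ := (M.filter (0 < ·)).map Nat.toPNat'

lemma ms_zero : ms 0 = 0 := by simp [ms]
lemma ms_cons_zero (M : Multiset ℕ) : ms (0 ::ₘ M) = ms M := by simp [ms]
lemma ms_cons_pos (M : Multiset ℕ) (n : ℕ) (h : 0 < n) :
    ms (n ::ₘ M) = n.toPNat' ::ₘ ms M := by
  simp [ms, h]

lemma ms_map (M : Multiset ℕ) : (ms M).map (fun a : ℕ+ => (a : ℕ)) = M.filter (0 < ·) := by
  induction M using Multiset.induction_on with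
  | empty => simp [ms]
  | cons a M ih =>
    rcases Nat.eq_zero_or_pos a with rfl | h
    · rw [ms_cons_zero, ih]; simp
    · rw [ms_cons_pos _ _ h, Multiset.map_cons, ih, Multiset.filter_cons_of_pos (p := (0 < ·)) _ h]
      simp [h]

lemma sum_filter_pos (M : Multiset ℕ) : (M.filter (0 < ·)).sum = M.sum := by
  induction M using Multiset.induction_on with
  | empty => simp
  | cons a M ih =>
    rcases Nat.eq_zero_or_pos a with rfl | h
    · simp [ih]
    · rw [Multiset.filter_cons_of_pos (p := (0 < ·)) _ h]; simp [ih]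

lemma wt_ms (M : Multiset ℕ) : wt (ms M) = M.sum := by
  unfold wt
  rw [ms_map, sum_filter_pos]

lemma ms_self (mu : Multiset ℕ+) : ms (mu.map fun a : ℕ+ => (a : ℕ)) = mu := by
  apply Multiset.map_injective PNat.coe_injective
  refine (ms_map _).trans ?_
  rw [Multiset.filter_eq_self]
  intro a ha
  rw [Multiset.mem_map] at ha
  obtain ⟨b, _, rfl⟩ := ha
  exact b.pos

lemma list_PS (L : List ℕ) (hL : L.Pairwise (· ≥ ·)) (U : Multiset ℕ) (hU : U ≤ (L : Multiset ℕ))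
    (k : ℕ) (hk : Multiset.card U ≤ k) : U.sum ≤ (L.take k).sum := by
  induction L generalizing U k with
  | nil =>
    have : U = 0 := by simpa using hU
    simp [this]
  | cons a L ih =>
    rw [List.pairwise_cons] at hL
    rcases Multiset.empty_or_exists_mem U with rfl | ⟨u, hu⟩
    · simp
    have : ∃ u ∈ U, u ≤ a ∧ U.erase u ≤ (L : Multiset ℕ) := by
      by_cases ha : a ∈ U
      · refine ⟨a, ha, le_rfl, ?_⟩
        rw [Multiset.erase_le_iff_le_cons]
        exact hU
      · have hUL : U ≤ (L : Multiset ℕ) := by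
          have : U ≤ a ::ₘ (L : Multiset ℕ) := hU
          rwa [Multiset.le_cons_of_notMem ha] at this
        refine ⟨u, hu, ?_, (Multiset.erase_le _ _).trans hUL⟩
        exact hL.1 u (Multiset.mem_of_le hUL hu)
    obtain ⟨u, hu, hua, hU'⟩ := this
    have hcard := Multiset.card_erase_add_one hu
    cases k with
    | zero => omega
    | succ k =>
      have := ih hL.2 (U.erase u) hU' k (by omega)
      rw [← Multiset.cons_erase hu]
      simp
      omega

lemma pSum_ms (M U : Multiset ℕ) (hU : U ≤ M) (k : ℕ) (hk : Multiset.card U ≤ k) :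
    U.sum ≤ pSum (ms M) k := by
  rw [← sum_filter_pos]
  apply list_PS _ (desc_sorted _)
  · rw [desc_perm, ms_map]
    exact Multiset.filter_le_filter _ hU
  · exact (Multiset.card_le_card (Multiset.filter_le _ _)).trans hk

/-- multiset from a function -/
def msf {N : ℕ} (b : Fin N → ℕ) : Multiset ℕ+ := ms ((Finset.univ : Finset (Fin N)).val.map b)

lemma wt_msf {N : ℕ} (b : Fin N → ℕ) : wt (msf b) = ∑ i, b i := wt_ms _

lemma sum_le_pSum_msf {N : ℕ} (b : Fin N → ℕ) (S : Finset (Fin N)) {k : ℕ} (hk : S.card ≤ k) :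
    ∑ i ∈ S, b i ≤ pSum (msf b) k := by
  apply pSum_ms _ (S.val.map b)
  · exact Multiset.map_le_map (Finset.val_le_iff.mpr (Finset.subset_univ S))
  · simpa using hk

/-- If partial sums of `b` dominate those of `mu`. -/
lemma le_msf {N : ℕ} (mu : Multiset ℕ+) (hN : Multiset.card mu ≤ N) (b : Fin N → ℕ)
    (hw : ∑ i, b i = wt mu)
    (h : ∀ k ≤ N, pSum mu k ≤ ∑ i ∈ Finset.univ.filter (fun i : Fin N => (i : ℕ) < k), b i) :
    DomLE mu (msf b) := by
  refine ⟨by rw [wt_msf, hw], fun k => ?_⟩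
  by_cases hk : k ≤ N
  · refine (h k hk).trans (sum_le_pSum_msf b _ ?_)
    rw [Fin.card_filter_val_lt]
    exact min_le_right _ _
  · rw [pSum_wt mu (by omega), ← hw]
    exact sum_le_pSum_msf b _ (by simp; omega)

lemma sum_filter_fin {N k : ℕ} (hk : k ≤ N) (f : ℕ → ℕ) :
    ∑ i ∈ Finset.univ.filter (fun i : Fin N => (i : ℕ) < k), f i = ∑ i ∈ Finset.range k, f i := by
  rw [Finset.sum_filter, Fin.sum_univ_eq_sum_range (fun i => if i < k then f i else 0) N,
    ← Finset.sum_filter]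
  congr 1
  ext i
  simp
  omega

end QR
end

open MvPolynomial
noncomputable section
namespace QR
set_option linter.unusedSectionVars false

lemma msf_pt (mu : Multiset ℕ+) {N : ℕ} (hN : N = Multiset.card mu) :
    msf (fun i : Fin N => pt mu i) = mu := by
  subst hN
  unfold msf
  have : (Finset.univ : Finset (Fin (Multiset.card mu))).val.map (fun i : Fin (Multiset.card mu) => pt mu i) =
      mu.map fun a : ℕ+ => (a : ℕ) := by
    rw [← desc_perm, Fin.univ_val_map]
    congr 1
    apply List.ext_getElem
    · simp [desc_len]
    · intro i h1 h2
      rw [List.getElem_ofFn]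
      exact List.getD_eq_getElem _ _ h2
  rw [this, ms_self]

lemma sum_filter_fin' {N k : ℕ} (hk : k ≤ N) (b : Fin N → ℕ) :
    ∑ i ∈ Finset.univ.filter (fun i : Fin N => (i : ℕ) < k), b i =
      ∑ i ∈ Finset.range k, (if h : i < N then b ⟨i, h⟩ else 0) := by
  rw [← sum_filter_fin hk]
  apply Finset.sum_congr rfl
  intro i _
  simp

lemma eq_of_msf {N : ℕ} (mu : Multiset ℕ+) (b : Fin N → ℕ)
    (h : ∀ k ≤ N, pSum mu k ≤ ∑ i ∈ Finset.univ.filter (fun i : Fin N => (i : ℕ) < k), b i)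
    (he : msf b = mu) (i : Fin N) : b i = pt mu i := by
  have key : ∀ k ≤ N, ∑ i ∈ Finset.range k, (if h : i < N then b ⟨i, h⟩ else 0) = pSum mu k := by
    intro k hk
    rw [← sum_filter_fin' hk]
    refine le_antisymm ?_ (h k hk)
    rw [← he]
    apply sum_le_pSum_msf
    rw [Fin.card_filter_val_lt]
    exact min_le_right _ _
  have h1 := key i (by omega)
  have h2 := key (i + 1) (by omega)
  rw [Finset.sum_range_succ, h1, pSum_succ] at h2
  simp at h2
  exact h2

lemma sum_range_le_finset (S : Finset ℕ) : ∑ i ∈ Finset.range S.card, i ≤ ∑ x ∈ S, x := by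
  induction S using Finset.induction_on_max with
  | empty => simp
  | insert a S ha ih =>
    have hn : a ∉ S := fun h => lt_irrefl _ (ha a h)
    rw [Finset.card_insert_of_notMem hn, Finset.sum_insert hn, Finset.sum_range_succ]
    have : S.card ≤ a := by
      have : S ⊆ Finset.range a := fun x hx => by simpa using ha x hx
      simpa using Finset.card_le_card this
    omega

lemma sum_range_le_inj {N : ℕ} (S : Finset (Fin N)) (f : Fin N → Fin N) (hf : f.Injective) :
    ∑ i ∈ Finset.range S.card, i ≤ ∑ x ∈ S, (f x : ℕ) := by
  have hi : Function.Injective (fun x => (f x : ℕ)) := fun a b h => hf (Fin.ext h)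
  have := sum_range_le_finset (S.map ⟨fun x => (f x : ℕ), hi⟩)
  simpa using this

section V
variable {R : Type} [CommRing R] [Algebra ℚ R]

/-- `h_mu` -/
def hP (mu : Multiset ℕ+) : MvPolynomial ℕ+ R := (mu.map fun a : ℕ+ => hh X (a : ℕ)).prod

lemma hP_ms (M : Multiset ℕ) : hP (R := R) (ms M) = (M.map (hh X)).prod := by
  unfold hP
  have : (ms M).map (fun a : ℕ+ => hh (X : ℕ+ → MvPolynomial ℕ+ R) (a : ℕ)) =
      (M.filter (0 < ·)).map (hh X) := by
    rw [← ms_map, Multiset.map_map]; rfl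
  rw [this]
  induction M using Multiset.induction_on with
  | empty => simp
  | cons a M ih =>
    have ih := ih (by rw [← ms_map, Multiset.map_map]; rfl)
    rcases Nat.eq_zero_or_pos a with rfl | h
    · simp [ih]
    · rw [Multiset.filter_cons_of_pos (p := (0 < ·)) _ h]; simp [ih]

lemma hP_msf {N : ℕ} (b : Fin N → ℕ) : hP (R := R) (msf b) = ∏ i, hh X (b i) := by
  unfold msf
  rw [hP_ms, Multiset.map_map]
  rfl

variable (R) in
/-- span of `h_nu`, `nu ≥ mu` -/
def Vge (mu : Multiset ℕ+) : Submodule R (MvPolynomial ℕ+ R) :=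
  Submodule.span R (hP '' {nu | DomLE mu nu})

variable (R) in
/-- span of `h_nu`, `nu > mu` -/
def Vgt (mu : Multiset ℕ+) : Submodule R (MvPolynomial ℕ+ R) :=
  Submodule.span R (hP '' {nu | StrictDom mu nu})

lemma hP_mem_Vge {mu nu : Multiset ℕ+} (h : DomLE mu nu) : hP nu ∈ Vge R mu :=
  Submodule.subset_span ⟨nu, h, rfl⟩
lemma hP_mem_Vgt {mu nu : Multiset ℕ+} (h : StrictDom mu nu) : hP nu ∈ Vgt R mu :=
  Submodule.subset_span ⟨nu, h, rfl⟩
lemma Vgt_le_Vge (mu : Multiset ℕ+) : Vgt R mu ≤ Vge R mu :=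
  Submodule.span_mono (Set.image_mono fun _ h => sle h)
lemma Vge_le_Vgt {mu nu : Multiset ℕ+} (h : StrictDom mu nu) : Vge R nu ≤ Vgt R mu :=
  Submodule.span_mono (Set.image_mono fun _ h' => strict_trans_le h h')
lemma Vge_mono {mu nu : Multiset ℕ+} (h : DomLE mu nu) : Vge R nu ≤ Vge R mu :=
  Submodule.span_mono (Set.image_mono fun _ h' => h.trans h')

/-- Jacobi–Trudi Schur function. -/
def sJ (mu : Multiset ℕ+) : MvPolynomial ℕ+ R := JT (Multiset.card mu) (fun i => (pt mu i : ℤ))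

lemma JT_term (mu : Multiset ℕ+) (σ : Equiv.Perm (Fin (Multiset.card mu))) (hσ : σ ≠ 1) :
    ∏ i : Fin (Multiset.card mu), hhz (X : ℕ+ → MvPolynomial ℕ+ R) ((pt mu i : ℤ) + (σ i : ℤ) - (i : ℤ)) ∈ Vgt R mu := by
  by_cases hneg : ∃ i : Fin (Multiset.card mu), (pt mu i : ℤ) + (σ i : ℤ) - (i : ℤ) < 0
  · obtain ⟨i, hi⟩ := hneg
    rw [Finset.prod_eq_zero (Finset.mem_univ i) (hhz_neg _ hi)]
    exact zero_mem _
  push Not at hneg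
  set b : Fin (Multiset.card mu) → ℕ := fun i => pt mu i + σ i - i with hb
  have hb' : ∀ i, b i + i = pt mu i + σ i := by
    intro i
    have := hneg i
    simp only [hb]
    omega
  have h1 : ∀ i : Fin (Multiset.card mu), (pt mu i : ℤ) + (σ i : ℤ) - (i : ℤ) = (b i : ℕ) := by
    intro i
    have := hb' i
    omega
  simp_rw [h1, hhz_nat]
  rw [← hP_msf]
  have hk : ∀ k ≤ Multiset.card mu,
      pSum mu k ≤ ∑ i ∈ Finset.univ.filter (fun i : Fin _ => (i : ℕ) < k), b i := by
    intro k hk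
    have e1 : ∑ i ∈ Finset.univ.filter (fun i : Fin (Multiset.card mu) => (i : ℕ) < k), (b i + i) =
        ∑ i ∈ Finset.univ.filter (fun i : Fin (Multiset.card mu) => (i : ℕ) < k), (pt mu i + σ i) :=
      Finset.sum_congr rfl fun i _ => hb' i
    rw [Finset.sum_add_distrib, Finset.sum_add_distrib, sum_filter_fin hk (pt mu),
      sum_filter_fin hk (fun i => i), ← pSum_eq] at e1
    have e2 := sum_range_le_inj
      (Finset.univ.filter (fun i : Fin (Multiset.card mu) => (i : ℕ) < k)) σ σ.injective
    rw [Fin.card_filter_val_lt, min_eq_right hk] at e2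
    omega
  apply hP_mem_Vgt
  refine ⟨?_, ?_⟩
  · intro he
    apply hσ
    ext i
    have := eq_of_msf mu b hk he.symm i
    have := hb' i
    simp
    omega
  · apply le_msf _ le_rfl _ _ hk
    have e1 : ∑ i, (b i + (i : ℕ)) = ∑ i : Fin (Multiset.card mu), (pt mu i + (σ i : ℕ)) :=
      Finset.sum_congr rfl fun i _ => hb' i
    rw [Finset.sum_add_distrib, Finset.sum_add_distrib,
      Equiv.sum_comp σ (fun i => (i : ℕ)), Fin.sum_univ_eq_sum_range (pt mu), ← pSum_eq,
      pSum_wt _ le_rfl] at e1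
    omega

lemma sum_perm_sub {N : ℕ} (M : Submodule R (MvPolynomial ℕ+ R))
    (f : Equiv.Perm (Fin N) → MvPolynomial ℕ+ R)
    (hf : ∀ σ, σ ≠ 1 → f σ ∈ M) :
    ∑ σ : Equiv.Perm (Fin N), (((Equiv.Perm.sign σ : ℤ)) : MvPolynomial ℕ+ R) * f σ - f 1 ∈ M := by
  rw [← Finset.add_sum_erase _ _ (Finset.mem_univ (1 : Equiv.Perm (Fin N)))]
  simp only [Equiv.Perm.sign_one, Units.val_one, Int.cast_one, one_mul, add_sub_cancel_left]
  refine Submodule.sum_mem _ fun σ hσ => ?_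
  have : (((Equiv.Perm.sign σ : ℤ)) : MvPolynomial ℕ+ R) * f σ = (Equiv.Perm.sign σ : ℤ) • f σ := by
    rw [zsmul_eq_mul]
  rw [this]
  exact M.toAddSubgroup.zsmul_mem (hf σ (by simpa using hσ)) _

lemma hP_prod (mu : Multiset ℕ+) : ∏ i : Fin (Multiset.card mu),
    hhz (X : ℕ+ → MvPolynomial ℕ+ R) ((pt mu i : ℤ) + (i : ℤ) - (i : ℤ)) = hP mu := by
  conv_rhs => rw [← msf_pt mu rfl, hP_msf]
  exact Finset.prod_congr rfl fun i _ => by rw [add_sub_cancel_right, hhz_nat]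

lemma sJ_sub (mu : Multiset ℕ+) : sJ mu - hP mu ∈ Vgt R mu := by
  unfold sJ
  rw [JT_leibniz, ← hP_prod]
  exact sum_perm_sub (Vgt R mu) (fun σ => ∏ i : Fin (Multiset.card mu),
    hhz X ((pt mu i : ℤ) + (σ i : ℤ) - (i : ℤ))) (JT_term mu)

/-- eigenvalue -/
def ee (q s : R) (mu : Multiset ℕ+) : R :=
  1 + (1 - s) * ∑ i ∈ Finset.range (Multiset.card mu), s ^ i * (q ^ (pt mu i) - 1)

lemma Dop_sJ_sub (q s : R) (mu : Multiset ℕ+) :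
    Dop q s (sJ mu) - ee q s mu • hP mu ∈ Vgt R mu := by
  unfold sJ
  rw [Dop_JT, ← hP_prod]
  have h := sum_perm_sub (Vgt R mu) (fun σ =>
    (C (ev q s (fun i => (pt mu i : ℤ) + (σ i : ℤ) - (i : ℤ)) (fun i => (σ i : ℕ))) *
    ∏ i : Fin (Multiset.card mu), hhz X ((pt mu i : ℤ) + (σ i : ℤ) - (i : ℤ)))) (by
      intro σ hσ
      rw [← smul_eq_C_mul]
      exact Submodule.smul_mem _ _ (JT_term mu σ hσ))
  have e : ev q s (fun i : Fin (Multiset.card mu) => (pt mu i : ℤ) +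
      (((1 : Equiv.Perm (Fin (Multiset.card mu))) i : Fin _) : ℤ) - (i : ℤ))
      (fun i => ((1 : Equiv.Perm (Fin (Multiset.card mu))) i : ℕ)) = ee q s mu := by
    unfold ev ee
    rw [Finset.sum_range]
    simp
  beta_reduce at h
  rw [e, ← smul_eq_C_mul] at h
  exact h

lemma Dop_hP (q s : R) (mu : Multiset ℕ+) :
    Dop q s (hP mu) - ee q s mu • hP mu ∈ Vgt R mu := by
  induction mu using dom_ind' with
  | h mu ih =>
    have h2 : ∀ g ∈ Vgt R mu, Dop q s g ∈ Vgt R mu := by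
      intro g hg
      refine Submodule.span_induction ?_ ?_ ?_ ?_ hg
      · rintro _ ⟨nu, hnu, rfl⟩
        have := Vge_le_Vgt hnu (Vgt_le_Vge _ (ih nu hnu))
        have h3 := Submodule.smul_mem _ (ee q s nu) (hP_mem_Vgt (R := R) hnu)
        simpa using add_mem this h3
      · simp
      · intro x y _ _ hx hy; rw [map_add]; exact add_mem hx hy
      · intro a x _ hx; rw [map_smul]; exact Submodule.smul_mem _ _ hx
    have h3 := h2 _ (sJ_sub mu)
    have h4 := Dop_sJ_sub q s mu
    rw [map_sub] at h3
    convert sub_mem h4 h3 using 1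
    abel

lemma Dop_Vge (q s : R) (mu : Multiset ℕ+) (g) (hg : g ∈ Vge R mu) : Dop q s g ∈ Vge R mu := by
  refine Submodule.span_induction ?_ ?_ ?_ ?_ hg
  · rintro _ ⟨nu, hnu, rfl⟩
    have := Vge_mono hnu (Vgt_le_Vge _ (Dop_hP q s nu))
    have h3 := Submodule.smul_mem _ (ee q s nu) (hP_mem_Vge (R := R) hnu)
    simpa using add_mem this h3
  · simp
  · intro x y _ _ hx hy; rw [map_add]; exact add_mem hx hy
  · intro a x _ hx; rw [map_smul]; exact Submodule.smul_mem _ _ hx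

lemma hP_mem_sJ (mu : Multiset ℕ+) : hP (R := R) mu ∈ Submodule.span R (sJ '' {nu | DomLE mu nu}) := by
  induction mu using dom_ind' with
  | h mu ih =>
    have h1 : Vgt R mu ≤ Submodule.span R (sJ '' {nu | DomLE mu nu}) := by
      apply Submodule.span_le.mpr
      rintro _ ⟨nu, hnu, rfl⟩
      exact Submodule.span_mono (Set.image_mono fun _ h' => (sle hnu).trans h') (ih nu hnu)
    have h2 : sJ mu ∈ Submodule.span R (sJ (R := R) '' {nu | DomLE mu nu}) :=
      Submodule.subset_span ⟨mu, DomLE.refl mu, rfl⟩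
    have := sub_mem h2 (h1 (sJ_sub mu))
    simpa using this

end V
end QR
end

open MvPolynomial
noncomputable section
namespace QR
set_option linter.unusedSectionVars false

section Form
variable {R : Type} [CommRing R]

/-- weight -/
def zw (κ : ℕ+ → R) (m : ℕ+ →₀ ℕ) : R := m.prod fun k a => (Nat.factorial a : R) * κ k ^ a

lemma zw_succ (κ : ℕ+ → R) (k : ℕ+) (a : ℕ+ →₀ ℕ) :
    zw κ (Finsupp.single k 1 + a) = ((a k : R) + 1) * κ k * zw κ a := by
  unfold zw
  have h0 : ∀ k : ℕ+, (Nat.factorial 0 : R) * κ k ^ 0 = 1 := by simp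
  rw [← Finsupp.mul_prod_erase' (Finsupp.single k 1 + a) k _ (fun k => h0 k),
    ← Finsupp.mul_prod_erase' a k _ (fun k => h0 k)]
  have : (Finsupp.single k 1 + a).erase k = a.erase k := by
    ext j
    by_cases h : j = k
    · subst h; simp
    · simp [Finsupp.erase_ne h]
  rw [this]
  simp only [Finsupp.add_apply, Finsupp.single_eq_same]
  rw [add_comm 1 (a k), Nat.factorial_succ, pow_succ]
  push_cast
  ring

/-- diagonal form -/
def FF0 (κ : ℕ+ → R) (f g : MvPolynomial ℕ+ R) : R :=
  ∑ m ∈ f.support, coeff m f * coeff m g * zw κ m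

lemma FF0_eq (κ : ℕ+ → R) (f g : MvPolynomial ℕ+ R) (S : Finset (ℕ+ →₀ ℕ)) (h : f.support ⊆ S) :
    FF0 κ f g = ∑ m ∈ S, coeff m f * coeff m g * zw κ m := by
  unfold FF0
  apply Finset.sum_subset h
  intro m _ hm
  rw [notMem_support_iff.mp hm]; simp

lemma FF0_symm (κ : ℕ+ → R) (f g : MvPolynomial ℕ+ R) : FF0 κ f g = FF0 κ g f := by
  rw [FF0_eq κ f g (f.support ∪ g.support) Finset.subset_union_left,
    FF0_eq κ g f (f.support ∪ g.support) Finset.subset_union_right]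
  exact Finset.sum_congr rfl fun m _ => by ring

lemma FF0_add_left (κ : ℕ+ → R) (f f' g : MvPolynomial ℕ+ R) :
    FF0 κ (f + f') g = FF0 κ f g + FF0 κ f' g := by
  have h := FF0_eq κ (f + f') g (f.support ∪ f'.support) support_add
  rw [h, FF0_eq κ f g (f.support ∪ f'.support) Finset.subset_union_left,
    FF0_eq κ f' g (f.support ∪ f'.support) Finset.subset_union_right, ← Finset.sum_add_distrib]
  exact Finset.sum_congr rfl fun m _ => by rw [coeff_add]; ring

lemma FF0_smul_left (κ : ℕ+ → R) (a : R) (f g : MvPolynomial ℕ+ R) :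
    FF0 κ (a • f) g = a * FF0 κ f g := by
  rw [FF0_eq κ (a • f) g f.support (support_smul), FF0, Finset.mul_sum]
  exact Finset.sum_congr rfl fun m _ => by rw [coeff_smul, smul_eq_mul]; ring

/-- diagonal form, bundled -/
def Fm (κ : ℕ+ → R) : MvPolynomial ℕ+ R →ₗ[R] MvPolynomial ℕ+ R →ₗ[R] R :=
  LinearMap.mk₂ R (FF0 κ) (FF0_add_left κ) (FF0_smul_left κ)
    (fun f g g' => by rw [FF0_symm, FF0_add_left, FF0_symm κ g, FF0_symm κ g'])
    (fun a f g => by rw [FF0_symm, FF0_smul_left, FF0_symm κ g]; rfl)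

lemma Fm_symm (κ : ℕ+ → R) (f g : MvPolynomial ℕ+ R) : Fm κ f g = Fm κ g f := FF0_symm κ f g

lemma Fm_apply (κ : ℕ+ → R) (f g : MvPolynomial ℕ+ R) :
    Fm κ f g = ∑ m ∈ f.support, coeff m f * coeff m g * zw κ m := rfl

lemma Fm_monomial (κ : ℕ+ → R) (a : ℕ+ →₀ ℕ) (x : R) (g : MvPolynomial ℕ+ R) :
    Fm κ (monomial a x) g = x * coeff a g * zw κ a := by
  have := FF0_eq κ (monomial a x) g {a} support_monomial_subset
  rw [Finset.sum_singleton, coeff_monomial, if_pos rfl] at this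
  exact this

lemma Fm_one (κ : ℕ+ → R) (g : MvPolynomial ℕ+ R) : Fm κ 1 g = coeff 0 g := by
  have := Fm_monomial κ 0 1 g
  simpa [zw] using this

lemma Fm_X (κ : ℕ+ → R) (k : ℕ+) (f g : MvPolynomial ℕ+ R) :
    Fm κ (X k * f) g = κ k * Fm κ f (pderiv k g) := by
  induction f using MvPolynomial.induction_on' with
  | add f f' hf hf' => rw [mul_add, map_add, map_add, LinearMap.add_apply, LinearMap.add_apply,
      hf, hf', mul_add]
  | monomial a x =>
    have hX : X k * monomial a x = monomial (Finsupp.single k 1 + a) x := by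
      rw [X, monomial_mul, one_mul]
    rw [hX, Fm_monomial, Fm_monomial, zw_succ]
    have : coeff a (pderiv k g) = ((a k : R) + 1) * coeff (Finsupp.single k 1 + a) g := by
      induction g using MvPolynomial.induction_on' with
      | add g g' hg hg' => rw [map_add, coeff_add, coeff_add, hg, hg', mul_add]
      | monomial b y =>
        rw [pderiv_monomial, coeff_monomial, coeff_monomial]
        by_cases hb : b = Finsupp.single k 1 + a
        · subst hb
          simp; ring
        · rw [if_neg hb, mul_zero]
          by_cases hk : b k = 0
          · simp [hk]
          · rw [if_neg]
            intro he
            apply hb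
            rw [← he, add_tsub_cancel_of_le]
            rw [Finsupp.single_le_iff]; omega
    rw [this]; ring

lemma Fm_C (κ : ℕ+ → R) (a : R) (g : MvPolynomial ℕ+ R) : Fm κ (C a) g = a * coeff 0 g := by
  rw [← mul_one (C a), ← smul_eq_C_mul, map_smul, LinearMap.smul_apply, Fm_one, smul_eq_mul]

lemma Fm_ext {κ κ' : ℕ+ → R} (hk : κ = κ') : Fm κ = Fm κ' := by rw [hk]

end Form

section FormField
variable {R : Type} [Field R] [CharZero R]

lemma Fm_nondeg (κ : ℕ+ → R) (hκ : ∀ k, κ k ≠ 0) (f : MvPolynomial ℕ+ R)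
    (h : ∀ g, Fm κ f g = 0) : f = 0 := by
  ext m
  have := h (monomial m 1)
  rw [Fm_symm, Fm_monomial, one_mul] at this
  rcases mul_eq_zero.mp this with h' | h'
  · simpa using h'
  · exfalso
    unfold zw at h'
    rw [Finsupp.prod, Finset.prod_eq_zero_iff] at h'
    obtain ⟨k, _, hk⟩ := h'
    exact mul_ne_zero (Nat.cast_ne_zero.mpr (Nat.factorial_ne_zero _)) (pow_ne_zero _ (hκ k)) hk

lemma Fm_scale (κ c : ℕ+ → R) (f g : MvPolynomial ℕ+ R) :
    Fm κ f (scaleHom c g) = Fm (fun k => κ k * c k) f g := by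
  induction g using MvPolynomial.induction_on' with
  | add g g' hg hg' => rw [map_add, map_add, map_add, hg, hg']
  | monomial b y =>
    have : scaleHom c (monomial b y) = monomial b (y * b.prod fun k e => c k ^ e) := by
      unfold scaleHom
      rw [aeval_monomial]
      have h1 : (b.prod fun k e => (C (c k) * X k : MvPolynomial ℕ+ R) ^ e) =
          C (b.prod fun k e => c k ^ e) * b.prod fun k e => (X k : MvPolynomial ℕ+ R) ^ e := by
        simp only [mul_pow]
        rw [Finsupp.prod_mul, map_finsuppProd]
        simp
      rw [h1, monomial_eq (a := y * _), C_mul, algebraMap_eq]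
      ring
    rw [this, Fm_symm, Fm_monomial, Fm_symm, Fm_monomial]
    have : zw (fun k => κ k * c k) b = (b.prod fun k e => c k ^ e) * zw κ b := by
      unfold zw
      rw [← Finsupp.prod_mul]
      apply Finsupp.prod_congr
      intro k _
      rw [mul_pow]; ring
    rw [this]; ring

lemma tau_deriv (s : R) (g : MvPolynomial ℕ+ R) : ∃ M0 : ℕ, ∀ M ≥ M0,
    Polynomial.derivative (tau s g) = ∑ i ∈ Finset.range M,
      Polynomial.C (C (((i : R) + 1) * (1 - s ^ (i + 1)))) * Polynomial.X ^ i *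
        tau s (pderiv (Nat.succPNat i) g) := by
  induction g using MvPolynomial.induction_on with
  | C a =>
    refine ⟨0, fun M _ => ?_⟩
    have : tau s (C a) = Polynomial.C (C a) := by
      have := (tau s).commutes a
      exact this
    simp [this]
  | add f g hf hg =>
    obtain ⟨M1, h1⟩ := hf
    obtain ⟨M2, h2⟩ := hg
    refine ⟨max M1 M2, fun M hM => ?_⟩
    simp only [map_add, mul_add, Finset.sum_add_distrib]
    rw [h1 M (le_trans (le_max_left _ _) hM), h2 M (le_trans (le_max_right _ _) hM)]
  | mul_X f k hf =>
    obtain ⟨M1, h1⟩ := hf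
    refine ⟨max M1 k, fun M hM => ?_⟩
    have htau : tau s (X k : MvPolynomial ℕ+ R) = Polynomial.C (X k) +
      Polynomial.C (C (1 - s ^ (k : ℕ))) * Polynomial.X ^ (k : ℕ) := by simp [tau]
    rw [map_mul, Polynomial.derivative_mul, h1 M (le_trans (le_max_left _ _) hM)]
    have hd : ∀ i, pderiv (Nat.succPNat i) (f * X k) =
        pderiv (Nat.succPNat i) f * X k + f * (if Nat.succPNat i = k then 1 else 0) := by
      intro i
      rw [Derivation.leibniz, pderiv_X, smul_eq_mul, smul_eq_mul, Pi.single_apply]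
      by_cases h : Nat.succPNat i = k
      · simp [h]; ring
      · rw [if_neg h, if_neg (fun e => h e.symm)]; ring
    simp only [hd, map_add, map_mul, mul_add, Finset.sum_add_distrib, Finset.sum_mul]
    refine congrArg₂ (· + ·) ?_ ?_
    · exact Finset.sum_congr rfl fun i _ => by ring
    · have hk : ((k : ℕ) - 1) ∈ Finset.range M := by
        have := k.pos
        have := le_trans (le_max_right M1 (k : ℕ)) hM
        simp; omega
      have hk' : Nat.succPNat ((k : ℕ) - 1) = k := by
        apply PNat.coe_injective
        have := k.pos
        simp
        omega
      rw [Finset.sum_eq_single_of_mem _ hk]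
      · rw [if_pos hk', htau]
        have e : ((k : ℕ) - 1 + 1) = k := by have := k.pos; omega
        have e2 : (((k : ℕ) - 1 : ℕ) : R) + 1 = ((k : ℕ) : R) := by
          rw [← e]; push_cast; simp
        rw [e, ← Polynomial.C_add, ← C_add, e2]
        simp only [map_add, Polynomial.derivative_C, Polynomial.derivative_C_mul,
          Polynomial.derivative_X_pow, C_mul, Polynomial.C_mul, zero_add, map_one, mul_one]
        simp
        ring
      · intro i _ hi
        rw [if_neg]
        · simp
        · intro e
          apply hi
          rw [← e]; simp

lemma tau_rec (s : R) (g : MvPolynomial ℕ+ R) (n : ℕ) :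
    ((n : R) + 1) • (tau s g).coeff (n + 1) = ∑ i ∈ Finset.range (n + 1),
      (((i : R) + 1) * (1 - s ^ (i + 1))) • (tau s (pderiv (Nat.succPNat i) g)).coeff (n - i) := by
  obtain ⟨M0, h⟩ := tau_deriv s g
  have h := congrArg (fun p => Polynomial.coeff p n) (h (max M0 (n + 1)) (le_max_left _ _))
  simp only [Polynomial.coeff_derivative, Polynomial.finsetSum_coeff] at h
  have e : ((n : R) + 1) • (tau s g).coeff (n + 1) =
      (tau s g).coeff (n + 1) * ((n : MvPolynomial ℕ+ R) + 1) := by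
    rw [smul_eq_C_mul]; simp; ring
  rw [e, h]
  have hs : Finset.range (n + 1) ⊆ Finset.range (max M0 (n + 1)) := by
    intro x; simp; omega
  rw [← Finset.sum_subset hs]
  · apply Finset.sum_congr rfl
    intro i hi
    have hi : i ≤ n := by simp at hi; omega
    rw [mul_assoc, Polynomial.coeff_C_mul, Polynomial.coeff_X_pow_mul', if_pos hi, smul_eq_C_mul]
  · intro i _ hi
    have hi : ¬ i ≤ n := by simp at hi; omega
    rw [mul_assoc, Polynomial.coeff_C_mul, Polynomial.coeff_X_pow_mul', if_neg hi, mul_zero]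

lemma AA_rec (q : R) (n : ℕ) :
    ((n : R) + 1) • AA q (n + 1) = ∑ i ∈ Finset.range (n + 1),
      (q ^ (i + 1) - 1) • (X (Nat.succPNat i) * AA q (n - i)) := by
  have := hh_rec (fun k : ℕ+ => (C (q ^ (k : ℕ) - 1) * X k : MvPolynomial ℕ+ R)) n
  have e : ((n : R) + 1) • AA q (n + 1) = ((n : MvPolynomial ℕ+ R) + 1) * AA q (n + 1) := by
    rw [smul_eq_C_mul]; simp
  rw [e]
  refine this.trans ?_
  apply Finset.sum_congr rfl
  intro i _
  rw [smul_eq_C_mul, ← mul_assoc]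
  simp [AA]

/-- the weights for which the operator is self adjoint -/
def kB (q t : R) (k : ℕ+) : R := ((k : ℕ) : R) * ((1 - t ^ (k : ℕ)) / (1 - q ^ (k : ℕ)))

lemma AA_adj (q t : R) (ht : t ≠ 0) (hq : ∀ k : ℕ, 1 - q ^ (k + 1) ≠ 0) (n : ℕ) :
    ∀ f g : MvPolynomial ℕ+ R, Fm (kB q t) (AA q n * f) g =
      t ^ n * Fm (kB q t) f ((tau t⁻¹ g).coeff n) := by
  induction n using Nat.strong_induction_on with
  | _ n ih =>
    cases n with
    | zero =>
      intro f g
      rw [AA_zero]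
      have : ∀ g : MvPolynomial ℕ+ R, (tau t⁻¹ g).coeff 0 = g := by
        intro g
        induction g using MvPolynomial.induction_on with
        | C a =>
          have : tau t⁻¹ (C a) = Polynomial.C (C a) := (tau t⁻¹).commutes a
          rw [this]; simp
        | add f g hf hg => rw [map_add, Polynomial.coeff_add, hf, hg]
        | mul_X f k hf =>
          rw [map_mul, Polynomial.mul_coeff_zero, hf]
          have hk : (0 : ℕ) ≠ k := k.pos.ne
          simp [tau, hk]
      rw [this]; simp
    | succ n =>
      intro f g
      have hn : ((n : R) + 1) ≠ 0 := by exact_mod_cast Nat.succ_ne_zero n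
      apply mul_left_cancel₀ hn
      have e1 : ((n : R) + 1) * Fm (kB q t) (AA q (n + 1) * f) g =
          Fm (kB q t) ((((n : R) + 1) • AA q (n + 1)) * f) g := by
        rw [smul_mul_assoc, map_smul]; rfl
      have e2 : ((n : R) + 1) * (t ^ (n + 1) * Fm (kB q t) f ((tau t⁻¹ g).coeff (n + 1))) =
          t ^ (n + 1) * Fm (kB q t) f (((n : R) + 1) • (tau t⁻¹ g).coeff (n + 1)) := by
        rw [map_smul, smul_eq_mul]; ring
      rw [e1, e2, AA_rec, tau_rec, Finset.sum_mul, map_sum, map_sum, LinearMap.sum_apply,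
        Finset.mul_sum]
      apply Finset.sum_congr rfl
      intro i hi
      have hi : i ≤ n := by simp at hi; omega
      rw [smul_mul_assoc, map_smul, LinearMap.smul_apply, mul_assoc, Fm_X, ih (n - i) (by omega),
        map_smul, smul_eq_mul, smul_eq_mul]
      have e3 : t ^ (n + 1) = t ^ (i + 1) * t ^ (n - i) := by rw [← pow_add]; congr 1; omega
      rw [e3]
      have hk : kB q t (Nat.succPNat i) = ((i : R) + 1) * ((1 - t ^ (i + 1)) / (1 - q ^ (i + 1))) := by
        simp [kB]
      have hqi := hq i
      have e4 : (q ^ (i + 1) - 1) * kB q t (Nat.succPNat i) =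
          t ^ (i + 1) * (((i : R) + 1) * (1 - t⁻¹ ^ (i + 1))) := by
        rw [hk, inv_pow]
        have : t ^ (i + 1) ≠ 0 := pow_ne_zero _ ht
        field_simp
        ring
      linear_combination (t ^ (n - i) *
        Fm (kB q t) f ((tau t⁻¹ (pderiv (Nat.succPNat i) g)).coeff (n - i))) * e4

lemma Dop_adj (q t : R) (ht : t ≠ 0) (hq : ∀ k : ℕ, 1 - q ^ (k + 1) ≠ 0)
    (f g : MvPolynomial ℕ+ R) :
    Fm (kB q t) (Dop q t⁻¹ f) g = Fm (kB q t) f (Dop q t⁻¹ g) := by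
  set N := max (tau t⁻¹ f).natDegree (tau t⁻¹ g).natDegree + 1 with hN
  have key : ∀ f g : MvPolynomial ℕ+ R, (tau t⁻¹ f).natDegree < N →
      Fm (kB q t) (Dop q t⁻¹ f) g = ∑ n ∈ Finset.range N,
        t ^ n * Fm (kB q t) ((tau t⁻¹ f).coeff n) ((tau t⁻¹ g).coeff n) := by
    intro f g hf
    rw [Dop_apply, evA_eq _ _ N hf, map_sum, LinearMap.sum_apply]
    exact Finset.sum_congr rfl fun n _ => AA_adj q t ht hq n _ _
  rw [Fm_symm (kB q t) f, key f g (by omega), key g f (by omega)]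
  exact Finset.sum_congr rfl fun n _ => by rw [Fm_symm]

end FormField
end QR
end

open MvPolynomial
noncomputable section
namespace QR

section Kostka
set_option linter.unusedSectionVars false
variable {R : Type} [CommRing R] [Algebra ℚ R]

/-- uniform recursion for integer index -/
lemma hhz_rec {S : Type} [CommRing S] [Algebra ℚ S] (c : ℕ+ → S) (n : ℕ) (z : ℤ) (hz : z ≤ n) :
    ∑ i ∈ Finset.range (n + 1), c (Nat.succPNat i) * hhz c (z - i) =
      ((z : S) + 1) * hhz c (z + 1) := by
  rcases lt_trichotomy z (-1) with h | h | h
  · rw [hhz_neg _ (by omega), mul_zero]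
    exact Finset.sum_eq_zero fun i _ => by rw [hhz_neg _ (by omega), mul_zero]
  · subst h
    rw [show ((-1 : ℤ) : S) + 1 = 0 by simp, zero_mul]
    exact Finset.sum_eq_zero fun i _ => by rw [hhz_neg _ (by omega), mul_zero]
  · obtain ⟨m, rfl⟩ : ∃ m : ℕ, z = m := ⟨z.toNat, by omega⟩
    rw [show ((m : ℤ) + 1) = ((m + 1 : ℕ) : ℤ) by push_cast; rfl, hhz_nat]
    rw [Int.cast_natCast, hh_rec]
    symm
    refine Finset.sum_subset_zero_on_sdiff (Finset.range_subset_range.mpr (by omega)) ?_ ?_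
    · intro i hi
      simp only [Finset.mem_sdiff, Finset.mem_range] at hi
      rw [hhz_neg _ (by omega), mul_zero]
    · intro i hi
      have : i < m + 1 := by simpa using hi
      rw [show (m : ℤ) - i = ((m - i : ℕ) : ℤ) by omega, hhz_nat]

lemma pderiv_hh (k : ℕ+) (n : ℕ) :
    ((k : ℕ) : MvPolynomial ℕ+ R) * pderiv k (hh X n) = hhz X ((n : ℤ) - (k : ℕ)) := by
  induction n using Nat.strong_induction_on with
  | _ n ih =>
    cases n with
    | zero =>
      have : ((0 : ℕ) : ℤ) - (k : ℕ) < 0 := by have := k.pos; omega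
      rw [hhz_neg _ this]; simp
    | succ n =>
      apply cancel_nat n
      have h1 := congrArg (fun x => ((k : ℕ) : MvPolynomial ℕ+ R) * pderiv k x)
        (hh_rec (S := MvPolynomial ℕ+ R) X n)
      simp only [map_sum, Derivation.leibniz, smul_eq_mul, Finset.mul_sum] at h1
      have h0 : pderiv k ((n : MvPolynomial ℕ+ R) + 1) = 0 := by simp
      rw [h0, mul_zero, add_zero] at h1
      rw [mul_left_comm, h1]
      have h2 : ∀ i ∈ Finset.range (n + 1), ((k : ℕ) : MvPolynomial ℕ+ R) *
          (X (Nat.succPNat i) * pderiv k (hh X (n - i)) + hh X (n - i) * pderiv k (X (Nat.succPNat i)))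
          = X (Nat.succPNat i) * hhz X (((n : ℤ) - (k : ℕ)) - i) +
            (if Nat.succPNat i = k then ((k : ℕ) : MvPolynomial ℕ+ R) * hh X (n - i) else 0) := by
        intro i hi
        have hin : i < n + 1 := by simpa using hi
        rw [mul_add, mul_left_comm, ih (n - i) (by omega), pderiv_X]
        congr 1
        · congr 2; omega
        · by_cases h : Nat.succPNat i = k
          · simp [h]
          · rw [if_neg h, Pi.single_eq_of_ne h]; simp
      rw [Finset.sum_congr rfl h2, Finset.sum_add_distrib,
        hhz_rec X n _ (by omega)]
      have h3 : ∑ i ∈ Finset.range (n + 1), (if Nat.succPNat i = k then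
          ((k : ℕ) : MvPolynomial ℕ+ R) * hh X (n - i) else 0) =
          ((k : ℕ) : MvPolynomial ℕ+ R) * hhz X ((n : ℤ) - (k : ℕ) + 1) := by
        have hk := k.pos
        by_cases h : (k : ℕ) ≤ n + 1
        · rw [Finset.sum_eq_single ((k : ℕ) - 1)]
          · have : Nat.succPNat ((k : ℕ) - 1) = k := by
              apply PNat.coe_injective; simp; omega
            rw [if_pos this, show (n : ℤ) - (k : ℕ) + 1 = ((n - ((k : ℕ) - 1) : ℕ) : ℤ) by omega, hhz_nat]
          · intro i _ hi
            rw [if_neg]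
            intro he
            apply hi
            rw [← he]; simp
          · intro hi
            simp at hi; omega
        · rw [hhz_neg _ (by omega), mul_zero]
          refine Finset.sum_eq_zero fun i hi => ?_
          rw [if_neg]
          intro he
          have := congrArg (fun x : ℕ+ => (x : ℕ)) he
          simp at this hi; omega
      rw [h3]
      rw [show ((n + 1 : ℕ) : ℤ) - (k : ℕ) = (n : ℤ) - (k : ℕ) + 1 by push_cast; ring]
      push_cast
      ring

lemma pderiv_hhz (k : ℕ+) (z : ℤ) :
    ((k : ℕ) : MvPolynomial ℕ+ R) * pderiv k (hhz X z) = hhz X (z - (k : ℕ)) := by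
  by_cases h : 0 ≤ z
  · obtain ⟨n, rfl⟩ : ∃ n : ℕ, z = n := ⟨z.toNat, by omega⟩
    rw [hhz_nat, pderiv_hh]
  · rw [hhz_neg _ (by omega), hhz_neg _ (by omega)]; simp

/-- product of complete symmetric functions -/
def GG (M : ℕ) (α : ℕ → ℤ) : MvPolynomial ℕ+ R := ∏ i ∈ Finset.range M, hhz X (α i)

lemma pderiv_GG (k : ℕ+) (M : ℕ) (α : ℕ → ℤ) :
    ((k : ℕ) : MvPolynomial ℕ+ R) * pderiv k (GG M α) =
      ∑ i ∈ Finset.range M, GG M (Function.update α i (α i - (k : ℕ))) := by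
  induction M with
  | zero => simp [GG]
  | succ M ih =>
    have e : ∀ β : ℕ → ℤ, GG (R := R) (M + 1) β = GG M β * hhz X (β M) := fun β => by
      simp [GG, Finset.prod_range_succ]
    rw [e, Derivation.leibniz, smul_eq_mul, smul_eq_mul, mul_add, Finset.sum_range_succ,
      mul_left_comm, pderiv_hhz, mul_left_comm, ih, add_comm]
    congr 1
    · rw [Finset.mul_sum]
      refine Finset.sum_congr rfl fun i hi => ?_
      have : M ≠ i := by simp at hi; omega
      rw [e, Function.update_of_ne this, mul_comm]
    · rw [e, Function.update_self]
      congr 1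
      refine Finset.prod_congr rfl fun i hi => ?_
      have : i ≠ M := by simp at hi; omega
      rw [Function.update_of_ne this]

lemma const_GG (M : ℕ) (α : ℕ →₀ ℕ) (hα : ∀ i, M ≤ i → α i = 0) :
    coeff 0 (GG (R := R) M (fun i => (α i : ℤ))) = if α = 0 then 1 else 0 := by
  rw [← constantCoeff_eq, GG, map_prod]
  have : ∀ i ∈ Finset.range M, constantCoeff (hhz (S := MvPolynomial ℕ+ R) X (α i : ℤ)) =
      if α i = 0 then 1 else 0 := by
    intro i _
    rw [hhz_nat, hh_map]
    simp only [constantCoeff_X]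
    rw [hh_zero_fun]
  rw [Finset.prod_congr rfl this]
  by_cases h : α = 0
  · subst h; simp
  · rw [if_neg h]
    obtain ⟨i, hi⟩ : ∃ i, α i ≠ 0 := by
      by_contra hc
      push Not at hc
      exact h (Finsupp.ext hc)
    apply Finset.prod_eq_zero (i := i)
    · rw [Finset.mem_range]
      by_contra hc
      exact hi (hα i (by omega))
    · rw [if_neg hi]

/-- evaluation in finitely many variables -/
def evM (M : ℕ) : MvPolynomial ℕ+ R →ₐ[R] MvPolynomial ℕ R :=
  aeval fun k : ℕ+ => ∑ i ∈ Finset.range M, X i ^ (k : ℕ)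

/-- The Hall parameters. -/
def kH (k : ℕ+) : R := ((k : ℕ) : R)

lemma Hall_coeff (M : ℕ) (f : MvPolynomial ℕ+ R) : ∀ (α : ℕ →₀ ℕ), (∀ i, M ≤ i → α i = 0) →
    Fm kH f (GG M (fun i => (α i : ℤ))) = coeff α (evM M f) := by
  induction f using MvPolynomial.induction_on with
  | C a =>
    intro α hα
    rw [Fm_C, const_GG M α hα]
    simp only [evM, algHom_C, algebraMap_eq, coeff_C]
    by_cases h : α = 0
    · simp [h]
    · rw [if_neg h, if_neg (Ne.symm h), mul_zero]
  | add f g hf hg =>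
    intro α hα
    rw [map_add, LinearMap.add_apply, hf α hα, hg α hα, map_add, coeff_add]
  | mul_X f k hf =>
    intro α hα
    rw [mul_comm, Fm_X, map_mul]
    have h1 : kH k * Fm kH f (pderiv k (GG M (fun i => (α i : ℤ)))) =
        Fm kH f (((k : ℕ) : MvPolynomial ℕ+ R) * pderiv k (GG M (fun i => (α i : ℤ)))) := by
      rw [show ((k : ℕ) : MvPolynomial ℕ+ R) = C (kH k) by simp [kH], ← smul_eq_C_mul, map_smul,
        smul_eq_mul]
    rw [h1, pderiv_GG, map_sum]
    have h2 : evM (R := R) M (X k) = ∑ i ∈ Finset.range M, X i ^ (k : ℕ) := by simp [evM]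
    rw [h2, Finset.sum_mul, coeff_sum]
    refine Finset.sum_congr rfl fun i hi => ?_
    rw [X_pow_eq_monomial, coeff_monomial_mul', one_mul]
    by_cases h : (k : ℕ) ≤ α i
    · have hle : Finsupp.single i (k : ℕ) ≤ α := by rwa [Finsupp.single_le_iff]
      rw [if_pos hle, ← hf (α - Finsupp.single i (k : ℕ))]
      · congr 2
        funext j
        by_cases hj : j = i
        · subst hj; simp; omega
        · rw [Function.update_of_ne hj]; simp [Finsupp.single_eq_of_ne hj]
      · intro j hj
        simp [hα j hj]
    · rw [if_neg (by rwa [Finsupp.single_le_iff])]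
      have : GG (R := R) M (Function.update (fun i => (α i : ℤ)) i ((α i : ℤ) - (k : ℕ))) = 0 := by
        apply Finset.prod_eq_zero hi
        rw [Function.update_self, hhz_neg _ (by omega)]
      rw [this, map_zero]

/-- variables cut off at `M` -/
def av (M j : ℕ) : MvPolynomial ℕ R := if j < M then X j else 0

/-- flagged power sums -/
def cv (M j : ℕ) (k : ℕ+) : MvPolynomial ℕ R := ∑ i ∈ Finset.Ico j M, X i ^ (k : ℕ)

lemma cv_succ (M j : ℕ) : cv (R := R) M j = fun k => cv M (j + 1) k + av M j ^ (k : ℕ) := by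
  funext k
  unfold cv av
  by_cases h : j < M
  · rw [if_pos h, Finset.sum_eq_sum_Ico_succ_bot h, add_comm]
  · rw [if_neg h, Finset.Ico_eq_empty (by omega), Finset.Ico_eq_empty (by omega)]
    simp

lemma flag_rec (M j : ℕ) (z : ℤ) : hhz (cv (R := R) M j) z =
    hhz (cv M (j + 1)) z + av M j * hhz (cv M j) (z - 1) := by
  rw [cv_succ]; exact hhz_add_pow _ _ _

lemma flag_det_step (N M k : ℕ) (α : ℕ → ℤ) :
    Matrix.det (Matrix.of fun i j : Fin N => hhz (cv (R := R) M (min j k)) (α i + (j : ℤ) - (i : ℤ))) =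
    Matrix.det (Matrix.of fun i j : Fin N =>
      hhz (cv (R := R) M (min j (k + 1))) (α i + (j : ℤ) - (i : ℤ))) := by
  cases N with
  | zero => simp
  | succ N =>
    apply Matrix.det_eq_of_forall_col_eq_smul_add_pred
      (fun j : Fin N => if k ≤ (j : ℕ) then av M k else 0)
    · intro i; simp
    · intro i j
      simp only [Matrix.of_apply, Fin.val_succ, Fin.val_castSucc]
      by_cases h : k ≤ (j : ℕ)
      · rw [if_pos h, min_eq_right (by omega), min_eq_right (by omega), min_eq_right (by omega),
          flag_rec]
        congr 3
        push_cast; ring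
      · rw [if_neg h, min_eq_left (by omega), min_eq_left (by omega), zero_mul, add_zero]

lemma flag_det (N M k : ℕ) (α : ℕ → ℤ) :
    Matrix.det (Matrix.of fun i j : Fin N => hhz (cv (R := R) M 0) (α i + (j : ℤ) - (i : ℤ))) =
    Matrix.det (Matrix.of fun i j : Fin N =>
      hhz (cv (R := R) M (min j k)) (α i + (j : ℤ) - (i : ℤ))) := by
  induction k with
  | zero => simp
  | succ k ih => rw [ih, flag_det_step]

lemma evM_JT (N M : ℕ) (α : ℕ → ℤ) : evM (R := R) M (JT N α) =
    Matrix.det (Matrix.of fun i j : Fin N =>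
      hhz (cv (R := R) M j) (α i + (j : ℤ) - (i : ℤ))) := by
  have h : evM (R := R) M (JT N α) =
      Matrix.det (Matrix.of fun i j : Fin N => hhz (cv (R := R) M 0) (α i + (j : ℤ) - (i : ℤ))) := by
    unfold JT
    rw [AlgHom.map_det]
    refine congrArg Matrix.det (Matrix.ext fun i j => ?_)
    simp only [AlgHom.mapMatrix_apply, Matrix.map_apply, Matrix.of_apply]
    have h3 : (fun k : ℕ+ => evM (R := R) M (X k)) = cv M 0 := by
      funext k
      rw [evM, aeval_X, cv, Finset.range_eq_Ico]
    have h4 := hhz_map (evM (R := R) M : MvPolynomial ℕ+ R →+* MvPolynomial ℕ R) X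
      (α i + (j : ℤ) - (i : ℤ))
    rw [← h3]
    exact h4
  rw [h, flag_det N M N]
  congr 1
  ext1 i j
  simp only [Matrix.of_apply]
  rw [min_eq_left (by omega)]

/-- support predicate -/
def SP (A : Set (ℕ →₀ ℕ)) (f : MvPolynomial ℕ R) : Prop := ∀ d, coeff d f ≠ 0 → d ∈ A

lemma SP_mono {A B : Set (ℕ →₀ ℕ)} (h : A ⊆ B) {f : MvPolynomial ℕ R} (hf : SP A f) : SP B f :=
  fun d hd => h (hf d hd)

lemma SP_add {A : Set (ℕ →₀ ℕ)} {f g : MvPolynomial ℕ R} (hf : SP A f) (hg : SP A g) :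
    SP A (f + g) := by
  intro d hd
  by_contra hc
  apply hd
  rw [coeff_add, not_not.mp (mt (hf d) hc), not_not.mp (mt (hg d) hc), add_zero]

lemma SP_zero (A : Set (ℕ →₀ ℕ)) : SP A (0 : MvPolynomial ℕ R) := fun d hd => by simp at hd

lemma SP_sum {ι : Type} {A : Set (ℕ →₀ ℕ)} (S : Finset ι) (f : ι → MvPolynomial ℕ R)
    (h : ∀ i ∈ S, SP A (f i)) : SP A (∑ i ∈ S, f i) := by
  classical
  induction S using Finset.induction_on with
  | empty => simpa using SP_zero A
  | insert a S ha ih =>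
    rw [Finset.sum_insert ha]
    exact SP_add (h a (by simp)) (ih fun i hi => h i (by simp [hi]))

lemma SP_mul {A B D : Set (ℕ →₀ ℕ)} {f g : MvPolynomial ℕ R} (hf : SP A f) (hg : SP B g)
    (h : ∀ a ∈ A, ∀ b ∈ B, a + b ∈ D) : SP D (f * g) := by
  classical
  intro d hd
  rw [coeff_mul] at hd
  obtain ⟨x, hx, hne⟩ := Finset.exists_ne_zero_of_sum_ne_zero hd
  rw [← Finset.HasAntidiagonal.mem_antidiagonal.mp hx]
  exact h _ (hf _ (left_ne_zero_of_mul hne)) _ (hg _ (right_ne_zero_of_mul hne))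

lemma SP_one {A : Set (ℕ →₀ ℕ)} (h : 0 ∈ A) : SP A (1 : MvPolynomial ℕ R) := by
  intro d hd
  rw [coeff_one] at hd
  have : 0 = d := by by_contra hc; simp [hc] at hd
  rwa [← this]

lemma SP_X_pow {A : Set (ℕ →₀ ℕ)} (i n : ℕ) (h : Finsupp.single i n ∈ A) :
    SP A (X i ^ n : MvPolynomial ℕ R) := by
  intro d hd
  rw [X_pow_eq_monomial, coeff_monomial] at hd
  have : Finsupp.single i n = d := by by_contra hc; simp [hc] at hd
  rwa [← this]

lemma SP_prod {ι : Type} (T : ℕ → Set (ℕ →₀ ℕ)) (T0 : 0 ∈ T 0)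
    (TT : ∀ m n, ∀ a ∈ T m, ∀ b ∈ T n, a + b ∈ T (m + n))
    (S : Finset ι) (f : ι → MvPolynomial ℕ R) (e : ι → ℕ) (h : ∀ i ∈ S, SP (T (e i)) (f i)) :
    SP (T (∑ i ∈ S, e i)) (∏ i ∈ S, f i) := by
  classical
  induction S using Finset.induction_on with
  | empty => simpa using SP_one T0
  | insert a S ha ih =>
    rw [Finset.sum_insert ha, Finset.prod_insert ha]
    exact SP_mul (h a (by simp)) (ih fun i hi => h i (by simp [hi])) (TT _ _)

lemma SP_hh (T : ℕ → Set (ℕ →₀ ℕ)) (T0 : 0 ∈ T 0)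
    (TT : ∀ m n, ∀ a ∈ T m, ∀ b ∈ T n, a + b ∈ T (m + n)) (c : ℕ+ → MvPolynomial ℕ R)
    (hc : ∀ k : ℕ+, SP (T k) (c k)) (n : ℕ) : SP (T n) (hh c n) := by
  induction n using Nat.strong_induction_on with
  | _ n ih =>
    cases n with
    | zero => simpa using SP_one T0
    | succ n =>
      have h1 : SP (T (n + 1)) (((n : MvPolynomial ℕ R) + 1) * hh c (n + 1)) := by
        rw [hh_rec]
        apply SP_sum
        intro i hi
        have : i < n + 1 := by simpa using hi
        refine SP_mul (hc _) (ih (n - i) (by omega)) fun a ha b hb => ?_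
        have := TT _ _ a ha b hb
        rwa [show ((Nat.succPNat i : ℕ+) : ℕ) + (n - i) = n + 1 by simp; omega] at this
      intro d hd
      apply h1
      intro h0
      apply hd
      rw [show ((n : MvPolynomial ℕ R) + 1) = C ((n : R) + 1) by simp, coeff_C_mul] at h0
      apply cancel_nat (S := R) n
      rw [h0, mul_zero]

end Kostka
end QR
end

open MvPolynomial
noncomputable section
namespace QR

section Kostka2
set_option linter.unusedSectionVars false
variable {R : Type} [CommRing R] [Algebra ℚ R]

/-- partial degree -/
def ph (k : ℕ) (d : ℕ →₀ ℕ) : ℕ := ∑ i ∈ Finset.range k, d i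

lemma ph_add (k : ℕ) (a b : ℕ →₀ ℕ) : ph k (a + b) = ph k a + ph k b := by
  simp [ph, Finset.sum_add_distrib]

lemma ph_single (k i n : ℕ) : ph k (Finsupp.single i n) = if i < k then n else 0 := by
  unfold ph
  by_cases h : i < k
  · rw [if_pos h, Finset.sum_eq_single i]
    · simp
    · intro j _ hj; simp [Finsupp.single_eq_of_ne hj]
    · intro hi; simp at hi; omega
  · rw [if_neg h]
    refine Finset.sum_eq_zero fun j hj => ?_
    have : j ≠ i := by simp at hj; omega
    simp [Finsupp.single_eq_of_ne this]

lemma ph_zero (k : ℕ) : ph k 0 = 0 := by simp [ph]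

lemma SP_le (M j k n : ℕ) : SP {d | ph k d ≤ n} (hh (cv (R := R) M j) n) := by
  refine SP_hh (fun n => {d | ph k d ≤ n}) (by simp [ph_zero]) ?_ _ ?_ n
  · intro m n a ha b hb
    simp only [Set.mem_ofPred_eq, ph_add] at *
    omega
  · intro e
    refine SP_sum _ _ fun i _ => SP_X_pow _ _ ?_
    simp only [Set.mem_ofPred_eq, ph_single]
    split_ifs <;> simp

lemma SP_eq (M j n : ℕ) : SP {d | ph M d = n} (hh (cv (R := R) M j) n) := by
  refine SP_hh (fun n => {d | ph M d = n}) (by simp [ph_zero]) ?_ _ ?_ n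
  · intro m n a ha b hb
    simp only [Set.mem_ofPred_eq, ph_add] at *
    omega
  · intro e
    refine SP_sum _ _ fun i hi => SP_X_pow _ _ ?_
    have : i < M := by simp at hi; omega
    simp [ph_single, this]

lemma SP_flag (M j k n : ℕ) (h : k ≤ j) : SP {d | ph k d ≤ 0} (hh (cv (R := R) M j) n) := by
  refine SP_hh (fun _ => {d | ph k d ≤ 0}) (by simp [ph_zero]) ?_ _ ?_ n
  · intro m n a ha b hb
    simp only [Set.mem_ofPred_eq, ph_add] at *
    omega
  · intro e
    refine SP_sum _ _ fun i hi => SP_X_pow _ _ ?_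
    have : ¬ i < k := by simp at hi; omega
    simp [ph_single, this]

lemma SP_lt (M d n : ℕ) (hd : d < M) :
    SP {e | ph (d + 1) e < n} (hh (cv (R := R) M d) n - X d ^ n) := by
  induction n with
  | zero => rw [hh_zero, pow_zero, sub_self]; exact SP_zero _
  | succ n ih =>
    have h1 : hh (cv (R := R) M d) (n + 1) - X d ^ (n + 1) =
        hh (cv M (d + 1)) (n + 1) + X d ^ 1 * (hh (cv (R := R) M d) n - X d ^ n) := by
      have := flag_rec (R := R) M d ((n + 1 : ℕ) : ℤ)
      rw [show ((n + 1 : ℕ) : ℤ) - 1 = (n : ℤ) by push_cast; ring, hhz_nat, hhz_nat, hhz_nat,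
        av, if_pos hd] at this
      rw [this]; ring
    rw [h1]
    apply SP_add
    · refine SP_mono ?_ (SP_flag M (d + 1) (d + 1) (n + 1) le_rfl)
      intro e he
      simp only [Set.mem_ofPred_eq] at *; omega
    · refine SP_mul (SP_X_pow (A := {e | ph (d + 1) e ≤ 1}) d 1 ?_) ih ?_
      · simp [ph_single]
      · intro a ha b hb
        simp only [Set.mem_ofPred_eq, ph_add] at *; omega

/-- the exponent of a partition -/
def al (M : ℕ) (mu : Multiset ℕ+) : ℕ →₀ ℕ :=
  Finsupp.onFinset (Finset.range (max M (Multiset.card mu))) (fun i => if i < M then pt mu i else 0)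
    (fun i hi => by
      have : i < M := by by_contra hc; simp [hc] at hi
      simp [this])

lemma al_apply (M : ℕ) (mu : Multiset ℕ+) (hM : Multiset.card mu ≤ M) (i : ℕ) : al M mu i = pt mu i := by
  simp only [al, Finsupp.onFinset_apply]
  by_cases h : i < M
  · rw [if_pos h]
  · rw [if_neg h, (pt_zero_iff mu i).mpr (by omega)]

lemma ph_al (M : ℕ) (mu : Multiset ℕ+) (hM : Multiset.card mu ≤ M) (k : ℕ) :
    ph k (al M mu) = pSum mu k := by
  rw [pSum_eq]
  exact Finset.sum_congr rfl fun i _ => al_apply M mu hM i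

lemma hP_GG (M : ℕ) (mu : Multiset ℕ+) (hM : Multiset.card mu ≤ M) :
    hP (R := R) mu = GG M (fun i => (al M mu i : ℤ)) := by
  conv_lhs => rw [← msf_pt mu rfl, hP_msf]
  rw [Fin.prod_univ_eq_prod_range (fun i => hh (X : ℕ+ → MvPolynomial ℕ+ R) (pt mu i))]
  unfold GG
  simp only [hhz_nat, al_apply M mu hM]
  refine Finset.prod_subset (Finset.range_subset_range.mpr hM) fun i _ hi => ?_
  rw [(pt_zero_iff mu i).mpr (by simpa using hi), hh_zero]

lemma K_coeff (M : ℕ) (mu : Multiset ℕ+) (hM : Multiset.card mu ≤ M) (f : MvPolynomial ℕ+ R) :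
    Fm kH f (hP mu) = coeff (al M mu) (evM M f) := by
  rw [hP_GG M mu hM]
  apply Hall_coeff
  intro i hi
  rw [al_apply M mu hM, (pt_zero_iff mu i).mpr (by omega)]

/-- A single term of the determinant. -/
def tm (M : ℕ) (nu : Multiset ℕ+) (σ : Equiv.Perm (Fin (Multiset.card nu))) : MvPolynomial ℕ R :=
  ∏ c : Fin (Multiset.card nu), hhz (cv M c) ((pt nu (σ c) : ℤ) + (c : ℤ) - (σ c : ℕ))

lemma K_expand (M : ℕ) (mu nu : Multiset ℕ+) (hM : Multiset.card mu ≤ M) :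
    Fm kH (sJ nu) (hP mu) = ∑ σ : Equiv.Perm (Fin (Multiset.card nu)),
      ((Equiv.Perm.sign σ : ℤ) : R) * coeff (al M mu) (tm M nu σ) := by
  rw [K_coeff M mu hM, sJ, evM_JT, Matrix.det_apply', coeff_sum]
  refine Finset.sum_congr rfl fun σ _ => ?_
  rw [show (((Equiv.Perm.sign σ : ℤ)) : MvPolynomial ℕ R) = C ((Equiv.Perm.sign σ : ℤ) : R) by simp,
    coeff_C_mul]
  rfl

lemma tm_bound (M : ℕ) (mu nu : Multiset ℕ+) (hM : Multiset.card mu ≤ M)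
    (σ : Equiv.Perm (Fin (Multiset.card nu))) (h : coeff (al M mu) (tm (R := R) M nu σ) ≠ 0) :
    wt mu = wt nu ∧ ∀ k ≤ Multiset.card nu, pSum mu k +
      ∑ c ∈ Finset.univ.filter (fun c : Fin (Multiset.card nu) => (c : ℕ) < k), (σ c : ℕ) ≤
        pSum nu k + ∑ c ∈ Finset.range k, c := by
  have hneg : ∀ c, 0 ≤ (pt nu (σ c) : ℤ) + (c : ℤ) - (σ c : ℕ) := by
    intro c
    by_contra hc
    apply h
    rw [tm, Finset.prod_eq_zero (Finset.mem_univ c), coeff_zero]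
    rw [hhz_neg _ (by omega)]
  choose b hb using fun c => Int.eq_ofNat_of_zero_le (hneg c)
  have htm : tm (R := R) M nu σ = ∏ c : Fin (Multiset.card nu), hh (cv M c) (b c) := by
    refine Finset.prod_congr rfl fun c _ => ?_
    rw [hb, hhz_nat]
  have hb' : ∀ c, b c + (σ c : ℕ) = pt nu (σ c) + c := fun c => by have := hb c; omega
  rw [htm] at h
  constructor
  · have := SP_prod (fun n => {d | ph M d = n}) (by simp [ph_zero]) (by
      intro m n a ha b hb
      simp only [Set.mem_ofPred_eq, ph_add] at *
      omega) Finset.univ _ b (fun c _ => SP_eq (R := R) M c (b c)) _ h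
    simp only [Set.mem_ofPred_eq] at this
    rw [ph_al M mu hM, pSum_wt mu hM] at this
    have h2 := Finset.sum_congr (rfl : (Finset.univ : Finset (Fin (Multiset.card nu))) = _)
      fun c _ => hb' c
    rw [Finset.sum_add_distrib, Finset.sum_add_distrib,
      Equiv.sum_comp σ (fun c : Fin (Multiset.card nu) => (c : ℕ)),
      Equiv.sum_comp σ (fun c : Fin (Multiset.card nu) => pt nu c)] at h2
    have h3 := wt_msf (fun i : Fin (Multiset.card nu) => pt nu i)
    rw [msf_pt nu rfl] at h3
    omega
  · intro k hk
    have := SP_prod (fun n => {d | ph k d ≤ n}) (by simp [ph_zero]) (by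
      intro m n a ha b hb
      simp only [Set.mem_ofPred_eq, ph_add] at *
      omega) Finset.univ (fun c : Fin (Multiset.card nu) => hh (cv (R := R) M c) (b c))
      (fun c => if (c : ℕ) < k then b c else 0) (fun c _ => by
        by_cases hc : (c : ℕ) < k
        · simp only [if_pos hc]; exact SP_le M c k (b c)
        · simp only [if_neg hc]; exact SP_flag M c k (b c) (by omega)) _ h
    simp only [Set.mem_ofPred_eq] at this
    rw [ph_al M mu hM, ← Finset.sum_filter] at this
    have h2 := Finset.sum_congr
      (rfl : (Finset.univ.filter (fun c : Fin (Multiset.card nu) => (c : ℕ) < k)) = _)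
      fun c _ => hb' c
    rw [Finset.sum_add_distrib, Finset.sum_add_distrib, sum_filter_fin hk (fun c => c)] at h2
    have h3 : ∑ c ∈ Finset.univ.filter (fun c : Fin (Multiset.card nu) => (c : ℕ) < k), pt nu (σ c)
        ≤ pSum nu k := by
      have := sum_le_pSum_msf (k := k) (fun i : Fin (Multiset.card nu) => pt nu i)
        ((Finset.univ.filter (fun c : Fin (Multiset.card nu) => (c : ℕ) < k)).map σ.toEmbedding) (by
          rw [Finset.card_map, Fin.card_filter_val_lt]
          exact min_le_right _ _)
      rw [msf_pt nu rfl, Finset.sum_map] at this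
      exact this
    omega

lemma K_zero (mu nu : Multiset ℕ+) (h : ¬ DomLE mu nu) : Fm (kH (R := R)) (sJ nu) (hP mu) = 0 := by
  rw [K_expand (Multiset.card mu) mu nu le_rfl]
  refine Finset.sum_eq_zero fun σ _ => ?_
  by_contra hc
  have h1 := tm_bound _ mu nu le_rfl σ (right_ne_zero_of_mul hc)
  apply h
  refine ⟨h1.1, fun k => ?_⟩
  by_cases hk : k ≤ Multiset.card nu
  · have h2 := h1.2 k hk
    have h3 := sum_range_le_inj (Finset.univ.filter (fun c : Fin (Multiset.card nu) => (c : ℕ) < k))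
      σ σ.injective
    rw [Fin.card_filter_val_lt, min_eq_right hk] at h3
    omega
  · rw [pSum_wt nu (by omega), ← h1.1]
    exact pSum_le_wt mu k

lemma peel (nu : Multiset ℕ+) (d : ℕ) (hd : d ≤ Multiset.card nu) :
    coeff (al (Multiset.card nu) nu) (∏ c ∈ Finset.range (Multiset.card nu),
      (if c < d then (X c ^ pt nu c : MvPolynomial ℕ R) else hh (cv (Multiset.card nu) c) (pt nu c))) =
    coeff (al (Multiset.card nu) nu) (∏ c ∈ Finset.range (Multiset.card nu),
      (hh (cv (R := R) (Multiset.card nu) c) (pt nu c))) := by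
  induction d with
  | zero => simp
  | succ d ih =>
    rw [← ih (by omega)]
    set N := Multiset.card nu with hN
    have hmem : d ∈ Finset.range N := by simp; omega
    rw [← Finset.prod_erase_mul _ _ hmem, ← Finset.prod_erase_mul _ _ hmem]
    simp only [lt_irrefl, if_false, Nat.lt_succ_self, if_true]
    have he : ∏ c ∈ (Finset.range N).erase d,
        (if c < d + 1 then (X c ^ pt nu c : MvPolynomial ℕ R) else hh (cv N c) (pt nu c)) =
        ∏ c ∈ (Finset.range N).erase d,
        (if c < d then (X c ^ pt nu c : MvPolynomial ℕ R) else hh (cv N c) (pt nu c)) := by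
      refine Finset.prod_congr rfl fun c hc => ?_
      have : c ≠ d := Finset.ne_of_mem_erase hc
      by_cases h : c < d
      · rw [if_pos h, if_pos (by omega)]
      · rw [if_neg h, if_neg (by omega)]
    rw [he]
    symm
    rw [← sub_eq_zero, ← coeff_sub, ← mul_sub]
    by_contra hc
    have h1 := SP_prod (fun n => {e | ph (d + 1) e ≤ n}) (by simp [ph_zero]) (by
      intro m n a ha b hb
      simp only [Set.mem_ofPred_eq, ph_add] at *
      omega) ((Finset.range N).erase d)
        (fun c => if c < d then (X c ^ pt nu c : MvPolynomial ℕ R) else hh (cv N c) (pt nu c))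
        (fun c => if c < d then pt nu c else 0) (by
          intro c hc
          have : c ≠ d := Finset.ne_of_mem_erase hc
          by_cases h : c < d
          · simp only [if_pos h]
            refine SP_X_pow _ _ ?_
            simp only [Set.mem_ofPred_eq, ph_single]
            split_ifs <;> simp
          · simp only [if_neg h]
            exact SP_flag N c (d + 1) _ (by omega))
    have h2 := SP_mul (D := {e | ph (d + 1) e < pSum nu (d + 1)}) h1
      (SP_lt (R := R) N d (pt nu d) (by omega)) (by
        intro a ha b hb
        simp only [Set.mem_ofPred_eq, ph_add] at *
        have h3 : ∑ c ∈ (Finset.range N).erase d, (if c < d then pt nu c else 0) = pSum nu d := by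
          rw [pSum_eq, ← Finset.sum_filter]
          congr 1
          ext c
          simp; omega
        rw [pSum_succ]
        omega) _ hc
    simp only [Set.mem_ofPred_eq] at h2
    rw [ph_al N nu le_rfl] at h2
    omega

lemma K_one (nu : Multiset ℕ+) : Fm (kH (R := R)) (sJ nu) (hP nu) = 1 := by
  rw [K_expand (Multiset.card nu) nu nu le_rfl, Finset.sum_eq_single 1]
  · have : tm (R := R) (Multiset.card nu) nu 1 = ∏ c ∈ Finset.range (Multiset.card nu),
        (hh (cv (R := R) (Multiset.card nu) c) (pt nu c)) := by
      rw [← Fin.prod_univ_eq_prod_range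
        (fun c => hh (cv (R := R) (Multiset.card nu) c) (pt nu c)) (Multiset.card nu)]
      refine Finset.prod_congr rfl fun c _ => ?_
      rw [Equiv.Perm.one_apply, add_sub_cancel_right, hhz_nat]
    rw [this, ← peel nu _ le_rfl]
    have h2 : ∏ c ∈ Finset.range (Multiset.card nu),
      (if c < Multiset.card nu then (X c ^ pt nu c : MvPolynomial ℕ R) else
        hh (cv (Multiset.card nu) c) (pt nu c)) = monomial (al (Multiset.card nu) nu) 1 := by
      rw [monomial_eq, C_1, one_mul, Finsupp.prod]
      refine (Finset.prod_congr rfl fun c hc => ?_).trans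
        (Finset.prod_subset (fun c hc => ?_) fun c _ hc => ?_).symm
      · have : c < Multiset.card nu := by simpa using hc
        rw [if_pos this, al_apply _ nu le_rfl]
      · rw [Finsupp.mem_support_iff, al_apply _ nu le_rfl] at hc
        have := mt (pt_zero_iff nu c).mpr hc
        simpa using this
      · rw [Finsupp.notMem_support_iff] at hc
        rw [hc, pow_zero]
    rw [h2, coeff_monomial]
    simp
  · intro σ _ hσ
    by_contra hc
    apply hσ
    have h1 := (tm_bound _ nu nu le_rfl σ (right_ne_zero_of_mul hc)).2
    have h2 : ∀ k ≤ Multiset.card nu, ∑ c ∈ Finset.range k,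
        (if h : c < Multiset.card nu then ((σ ⟨c, h⟩ : Fin (Multiset.card nu)) : ℕ) else 0) =
          ∑ c ∈ Finset.range k, c := by
      intro k hk
      have h3 := sum_range_le_inj
        (Finset.univ.filter (fun c : Fin (Multiset.card nu) => (c : ℕ) < k)) σ σ.injective
      rw [Fin.card_filter_val_lt, min_eq_right hk] at h3
      have := h1 k hk
      rw [sum_filter_fin' hk (fun c => ((σ c : Fin (Multiset.card nu)) : ℕ))] at h3 this
      omega
    ext c
    have h4 := h2 c (by omega)
    have h5 := h2 (c + 1) (by omega)
    rw [Finset.sum_range_succ, Finset.sum_range_succ, h4] at h5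
    simp at h5
    rw [h5]; rfl
  · intro h; exact absurd (Finset.mem_univ _) h

end Kostka2
end QR
end

open MvPolynomial
noncomputable section
namespace QR

section Span
set_option linter.unusedSectionVars false
variable {R : Type} [CommRing R] [Algebra ℚ R]

lemma hP_add (a b : Multiset ℕ+) : hP (R := R) (a + b) = hP a * hP b := by
  simp [hP]

lemma hP_span : Submodule.span R (Set.range (hP (R := R))) = ⊤ := by
  set A := Submodule.span R (Set.range (hP (R := R))) with hA
  have h1 : (1 : MvPolynomial ℕ+ R) ∈ A := Submodule.subset_span ⟨0, by simp [hP]⟩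
  have hmul : ∀ f ∈ A, ∀ g ∈ A, f * g ∈ A := by
    intro f hf g hg
    induction hf using Submodule.span_induction with
    | mem x hx =>
      obtain ⟨a, rfl⟩ := hx
      induction hg using Submodule.span_induction with
      | mem y hy =>
        obtain ⟨b, rfl⟩ := hy
        rw [← hP_add]
        exact Submodule.subset_span ⟨_, rfl⟩
      | zero => rw [mul_zero]; exact A.zero_mem
      | add y z _ _ hy hz => rw [mul_add]; exact A.add_mem hy hz
      | smul c y _ hy => rw [mul_smul_comm]; exact A.smul_mem c hy
    | zero => rw [zero_mul]; exact A.zero_mem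
    | add y z _ _ hy hz => rw [add_mul]; exact A.add_mem hy hz
    | smul c y _ hy => rw [smul_mul_assoc]; exact A.smul_mem c hy
  have hh_mem : ∀ n, hh (X : ℕ+ → MvPolynomial ℕ+ R) n ∈ A := by
    intro n
    cases n with
    | zero => rw [hh_zero]; exact h1
    | succ n => exact Submodule.subset_span ⟨{Nat.succPNat n}, by simp [hP]⟩
  have hX : ∀ n : ℕ, (X (Nat.succPNat n) : MvPolynomial ℕ+ R) ∈ A := by
    intro n
    induction n using Nat.strong_induction_on with
    | _ n ih =>
      have := hh_rec (X : ℕ+ → MvPolynomial ℕ+ R) n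
      rw [Finset.sum_range_succ, Nat.sub_self, hh_zero, mul_one] at this
      rw [← sub_eq_iff_eq_add'] at this
      rw [← this]
      apply A.sub_mem
      · rw [show ((n : MvPolynomial ℕ+ R) + 1) = C ((n : R) + 1) by simp, ← smul_eq_C_mul]
        exact A.smul_mem _ (hh_mem _)
      · exact A.sum_mem fun i hi => hmul _ (ih i (by simpa using hi)) _ (hh_mem _)
  rw [eq_top_iff]
  intro f _
  induction f using MvPolynomial.induction_on with
  | C a => rw [← mul_one (C a), ← smul_eq_C_mul]; exact A.smul_mem a h1
  | add f g hf hg => exact A.add_mem (hf trivial) (hg trivial)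
  | mul_X f k hf =>
    refine hmul _ (hf trivial) _ ?_
    have := hX (k.natPred)
    rwa [PNat.succPNat_natPred] at this

lemma finite_wt (n : ℕ) : {mu : Multiset ℕ+ | wt mu = n}.Finite := by
  refine Set.Finite.of_injOn (f := fun mu => fun i : Fin n => pt mu i) (t := Set.Iic fun _ => n)
    ?_ ?_ (Set.finite_Iic _)
  · intro mu hmu i
    have h1 := pSum_succ mu i
    have h2 := pSum_le_wt mu (i + 1)
    have h3 : wt mu = n := hmu
    simp only
    omega
  · intro a ha b hb hab
    have ha' : wt a = n := ha
    have hb' : wt b = n := hb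
    apply eq_of_pt
    intro i
    by_cases h : i < n
    · exact congrFun hab ⟨i, h⟩
    · have h1 := card_le_wt a
      have h2 := card_le_wt b
      rw [(pt_zero_iff a i).mpr (by omega), (pt_zero_iff b i).mpr (by omega)]

lemma finite_gt (lam : Multiset ℕ+) : {mu | StrictDom lam mu}.Finite :=
  (finite_wt (wt lam)).subset fun _ h => h.2.1.symm

/-- The finset of partitions strictly dominating `lam`. -/
def Sgt (lam : Multiset ℕ+) : Finset (Multiset ℕ+) := (finite_gt lam).toFinset

lemma mem_Sgt {lam mu : Multiset ℕ+} : mu ∈ Sgt lam ↔ StrictDom lam mu := by simp [Sgt]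

/-- annihilating polynomial -/
def pS (q s : R) (S : Finset (Multiset ℕ+)) : Polynomial R :=
  ∏ mu ∈ S, (Polynomial.X - Polynomial.C (ee q s mu))

lemma pS_kill (q s : R) (mu : Multiset ℕ+) : ∀ S : Finset (Multiset ℕ+),
    (∀ nu, DomLE mu nu → nu ∈ S) → Polynomial.aeval (Dop q s) (pS q s S) (hP mu) = 0 := by
  classical
  induction mu using dom_ind' with
  | _ mu ih =>
    intro S hS
    have hm : mu ∈ S := hS mu (DomLE.refl mu)
    have : pS q s S = pS q s (S.erase mu) * (Polynomial.X - Polynomial.C (ee q s mu)) :=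
      (Finset.prod_erase_mul _ _ hm).symm
    rw [this, map_mul, Module.End.mul_apply]
    have h2 : Polynomial.aeval (Dop q s) (Polynomial.X - Polynomial.C (ee q s mu)) (hP mu) =
        Dop q s (hP mu) - ee q s mu • hP mu := by
      simp [Algebra.algebraMap_eq_smul_one]
    rw [h2]
    have h3 := Dop_hP q s mu
    generalize Dop q s (hP mu) - ee q s mu • hP mu = w at h3
    induction h3 using Submodule.span_induction with
    | mem x hx =>
      obtain ⟨nu, hnu, rfl⟩ := hx
      refine ih nu hnu _ fun ka hka => ?_
      rw [Finset.mem_erase]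
      exact ⟨fun h => (strict_trans_le hnu hka).1 h.symm, hS ka ((sle hnu).trans hka)⟩
    | zero => rw [map_zero]
    | add y z _ _ hy hz => rw [map_add, hy, hz, add_zero]
    | smul c y _ hy => rw [map_smul, hy, smul_zero]

lemma aeval_eig (D : Module.End R (MvPolynomial ℕ+ R)) (e : R) (v : MvPolynomial ℕ+ R)
    (h : D v = e • v) (p : Polynomial R) : Polynomial.aeval D p v = p.eval e • v := by
  induction p using Polynomial.induction_on' with
  | add p q hp hq => rw [map_add, LinearMap.add_apply, hp, hq, Polynomial.eval_add, add_smul]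
  | monomial n a =>
    have : ∀ n : ℕ, (D ^ n) v = e ^ n • v := by
      intro n
      induction n with
      | zero => simp
      | succ n ih => rw [pow_succ', Module.End.mul_apply, ih, map_smul, h, smul_smul, pow_succ]
    rw [Polynomial.aeval_monomial, Polynomial.eval_monomial, Module.End.mul_apply, this, map_smul,
      Module.algebraMap_end_apply, smul_smul, mul_comm]

/-- Projection formula. -/
lemma proj (q s : R) (lam : Multiset ℕ+) (v : MvPolynomial ℕ+ R)
    (he : Dop q s v = ee q s lam • v) (hv : v - hP lam ∈ Vgt R lam) :
    (∏ mu ∈ Sgt lam, (ee q s lam - ee q s mu)) • v =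
      Polynomial.aeval (Dop q s) (pS q s (Sgt lam)) (hP lam) := by
  have h1 := aeval_eig _ _ _ he (pS q s (Sgt lam))
  rw [show (pS q s (Sgt lam)).eval (ee q s lam) = ∏ mu ∈ Sgt lam, (ee q s lam - ee q s mu) by
    simp [pS, Polynomial.eval_prod]] at h1
  rw [← h1, ← sub_eq_zero, ← map_sub]
  generalize v - hP lam = w at hv
  induction hv using Submodule.span_induction with
  | mem x hx =>
    obtain ⟨nu, hnu, rfl⟩ := hx
    exact pS_kill q s nu _ fun ka hka => mem_Sgt.mpr (strict_trans_le hnu hka)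
  | zero => rw [map_zero]
  | add y z _ _ hy hz => rw [map_add, hy, hz, add_zero]
  | smul c y _ hy => rw [map_smul, hy, smul_zero]

end Span
end QR
end

open MvPolynomial
noncomputable section
namespace QR

section Eigen
set_option linter.unusedSectionVars false
variable {R : Type} [Field R] [CharZero R]

/-- the scaling constants -/
def cc (q t : R) (k : ℕ+) : R := (1 - q ^ (k : ℕ)) / (1 - t ^ (k : ℕ))

/-- the Macdonald form constants -/
def kQ (q t : R) (k : ℕ+) : R := kH k * cc q t k

/-- Macdonald basis, internal form. -/
structure MB (q t : R) (P : Multiset ℕ+ → MvPolynomial ℕ+ R) : Prop where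
  ht : t ≠ 0
  hq : ∀ k : ℕ, 1 - q ^ (k + 1) ≠ 0
  ht' : ∀ k : ℕ, 1 - t ^ (k + 1) ≠ 0
  tri : ∀ lam, P lam - sJ lam ∈ Submodule.span R (sJ '' {mu | StrictDom mu lam})
  orth : ∀ lam mu, lam ≠ mu → Fm (kQ q t) (P lam) (P mu) = 0

variable {q t : R} {P : Multiset ℕ+ → MvPolynomial ℕ+ R}

lemma MB.cc_ne (h : MB q t P) (k : ℕ+) : cc q t k ≠ 0 := by
  have h1 := h.hq k.natPred
  have h2 := h.ht' k.natPred
  rw [PNat.natPred_add_one] at h1 h2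
  exact div_ne_zero h1 h2

lemma MB.sJ_mem (h : MB q t P) (nu : Multiset ℕ+) :
    sJ nu ∈ Submodule.span R (P '' {ka | DomLE ka nu}) := by
  induction nu using dom_ind with
  | _ nu ih =>
    have h1 : P nu ∈ Submodule.span R (P '' {ka | DomLE ka nu}) :=
      Submodule.subset_span ⟨nu, DomLE.refl nu, rfl⟩
    have h2 : Submodule.span R (sJ '' {mu | StrictDom mu nu}) ≤
        Submodule.span R (P '' {ka | DomLE ka nu}) := by
      rw [Submodule.span_le]
      rintro _ ⟨mu, hmu, rfl⟩
      exact Submodule.span_mono (Set.image_mono fun ka hka => DomLE.trans hka (sle hmu)) (ih mu hmu)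
    have := sub_mem h1 (h2 (h.tri nu))
    rwa [sub_sub_cancel] at this

lemma MB.span (h : MB q t P) : Submodule.span R (Set.range P) = ⊤ := by
  rw [eq_top_iff, ← hP_span, Submodule.span_le]
  rintro _ ⟨mu, rfl⟩
  have h1 := hP_mem_sJ (R := R) mu
  have : Submodule.span R (sJ '' {nu | DomLE mu nu}) ≤ Submodule.span R (Set.range P) := by
    rw [Submodule.span_le]
    rintro _ ⟨nu, _, rfl⟩
    exact Submodule.span_mono (Set.image_subset_range _ _) (h.sJ_mem nu)
  exact this h1

lemma span_zero {A : Set (MvPolynomial ℕ+ R)} (L : MvPolynomial ℕ+ R →ₗ[R] R)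
    (hA : ∀ a ∈ A, L a = 0) (v : MvPolynomial ℕ+ R) (hv : v ∈ Submodule.span R A) : L v = 0 := by
  have : Submodule.span R A ≤ LinearMap.ker L := Submodule.span_le.mpr fun a ha => hA a ha
  exact this hv

lemma MB.P_hP (h : MB q t P) (mu nu : Multiset ℕ+) (hmn : ¬ StrictDom mu nu) :
    Fm kH (P nu) (hP mu) = if mu = nu then 1 else 0 := by
  have h1 : Fm kH (P nu - sJ nu) (hP mu) = 0 := by
    refine span_zero ((Fm kH).flip (hP mu)) ?_ _ (h.tri nu)
    rintro _ ⟨ka, hka, rfl⟩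
    rw [LinearMap.flip_apply]
    apply K_zero
    intro hc
    exact hmn (strict_of_le_strict hc hka)
  rw [map_sub, LinearMap.sub_apply, sub_eq_zero] at h1
  rw [h1]
  split_ifs with he
  · rw [he, K_one]
  · exact K_zero _ _ fun hc => hmn ⟨he, hc⟩

lemma MB.ext (h : MB q t P) (κ : ℕ+ → R) (hκ : ∀ k, κ k ≠ 0) (f : MvPolynomial ℕ+ R)
    (hf : ∀ mu, Fm κ f (P mu) = 0) : f = 0 := by
  apply Fm_nondeg κ hκ
  intro g
  refine span_zero (Fm κ f) ?_ g (h.span ▸ Submodule.mem_top)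
  rintro _ ⟨mu, rfl⟩
  exact hf mu

lemma kH_ne (k : ℕ+) : kH (R := R) k ≠ 0 := Nat.cast_ne_zero.mpr k.pos.ne'

lemma MB.norm_ne (h : MB q t P) (lam : Multiset ℕ+) : Fm (kQ q t) (P lam) (P lam) ≠ 0 := by
  intro h0
  have h1 : P lam = 0 := by
    apply h.ext (kQ q t) fun k => mul_ne_zero (kH_ne k) (h.cc_ne k)
    intro mu
    by_cases hm : lam = mu
    · rw [← hm, h0]
    · exact h.orth _ _ hm
  have h2 := h.P_hP lam lam (fun hc => hc.1 rfl)
  rw [h1] at h2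
  simp at h2

/-- rescaled -/
def RR (q t : R) (P : Multiset ℕ+ → MvPolynomial ℕ+ R) (mu : Multiset ℕ+) : MvPolynomial ℕ+ R :=
  scaleHom (cc q t) (P mu)

lemma H_RR (f : MvPolynomial ℕ+ R) (mu : Multiset ℕ+) :
    Fm kH f (RR q t P mu) = Fm (kQ q t) f (P mu) := Fm_scale _ _ _ _

lemma MB.B_RR (h : MB q t P) (f : MvPolynomial ℕ+ R) (mu : Multiset ℕ+) :
    Fm (kB q t) f (RR q t P mu) = Fm kH f (P mu) := by
  rw [RR, Fm_scale]
  rw [Fm_ext (κ' := kH)]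
  funext k
  have := h.cc_ne k
  have h1 := h.hq k.natPred
  have h2 := h.ht' k.natPred
  rw [PNat.natPred_add_one] at h1 h2
  unfold kB cc kH
  field_simp

lemma MB.RR_mem (h : MB q t P) (mu : Multiset ℕ+) : RR q t P mu ∈ Vge R mu := by
  have h0 : RR q t P mu ∈ Submodule.span R (Set.range (hP (R := R))) :=
    hP_span (R := R) ▸ Submodule.mem_top
  rw [Finsupp.mem_span_range_iff_exists_finsupp] at h0
  obtain ⟨a, ha⟩ := h0
  have hor : ∀ nu, ¬ DomLE mu nu → Fm kH (sJ nu) (RR q t P mu) = 0 := by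
    intro nu hnu
    rw [H_RR]
    refine span_zero ((Fm (kQ q t)).flip (P mu)) ?_ _ (h.sJ_mem nu)
    rintro _ ⟨ka, hka, rfl⟩
    rw [LinearMap.flip_apply]
    apply h.orth
    rintro rfl
    exact hnu hka
  have key : ∀ ka, ¬ DomLE mu ka → a ka = 0 := by
    intro ka
    induction ka using dom_ind with
    | _ ka ih =>
      intro hka
      have h1 := hor ka hka
      rw [← ha, Finsupp.sum, map_sum] at h1
      rw [Finset.sum_eq_single ka] at h1
      · rw [map_smul, K_one, smul_eq_mul, mul_one] at h1
        exact h1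
      · intro nu _ hnu
        rw [map_smul]
        by_cases hd : DomLE nu ka
        · rw [ih nu ⟨hnu, hd⟩ (fun hc => hka (hc.trans hd)), zero_smul]
        · rw [K_zero _ _ hd, smul_zero]
      · intro hn
        rw [Finsupp.notMem_support_iff.mp hn, zero_smul, map_zero]
  rw [← ha]
  refine Submodule.sum_mem _ fun nu hnu => Submodule.smul_mem _ _ (hP_mem_Vge ?_)
  by_contra hc
  exact Finsupp.mem_support_iff.mp hnu (key nu hc)

lemma MB.Vge_perp (h : MB q t P) {lam mu : Multiset ℕ+} (hlm : ¬ DomLE lam mu)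
    (v : MvPolynomial ℕ+ R) (hv : v ∈ Vge R lam) : Fm kH (P mu) v = 0 := by
  refine span_zero (Fm kH (P mu)) ?_ _ hv
  rintro _ ⟨ka, hka, rfl⟩
  rw [h.P_hP ka mu (fun hc => hlm (DomLE.trans hka (sle hc))), if_neg]
  rintro rfl
  exact hlm hka

lemma MB.Vgt_perp (h : MB q t P) (lam : Multiset ℕ+)
    (v : MvPolynomial ℕ+ R) (hv : v ∈ Vgt R lam) : Fm kH (P lam) v = 0 := by
  refine span_zero (Fm kH (P lam)) ?_ _ hv
  rintro _ ⟨ka, hka, rfl⟩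
  have hka' : StrictDom lam ka := hka
  rw [h.P_hP ka lam, if_neg (fun hc => hka'.1 hc.symm)]
  intro hc
  exact hka'.1 (DomLE.antisymm (sle hka') (sle hc))

lemma MB.Dop_perp (h : MB q t P) {lam mu : Multiset ℕ+} (hne : mu ≠ lam) :
    Fm kH (P mu) (Dop q t⁻¹ (RR q t P lam)) = 0 := by
  by_cases hlm : DomLE lam mu
  · have hml : ¬ DomLE mu lam := fun hc => hne (hc.antisymm hlm)
    rw [Fm_symm, ← h.B_RR, Dop_adj q t h.ht h.hq, Fm_symm, h.B_RR, Fm_symm]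
    exact h.Vge_perp hml _ (Dop_Vge _ _ _ _ (h.RR_mem mu))
  · exact h.Vge_perp hlm _ (Dop_Vge _ _ _ _ (h.RR_mem lam))

/-- normalized -/
def QQ (q t : R) (P : Multiset ℕ+ → MvPolynomial ℕ+ R) (lam : Multiset ℕ+) : MvPolynomial ℕ+ R :=
  (Fm (kQ q t) (P lam) (P lam))⁻¹ • RR q t P lam

lemma MB.QQ_pair (h : MB q t P) (lam mu : Multiset ℕ+) :
    Fm kH (P mu) (QQ q t P lam) = if mu = lam then 1 else 0 := by
  rw [QQ, map_smul, H_RR, smul_eq_mul]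
  split_ifs with he
  · rw [he, inv_mul_cancel₀ (h.norm_ne lam)]
  · rw [h.orth _ _ he, mul_zero]

lemma MB.QQ_lead (h : MB q t P) (lam : Multiset ℕ+) : QQ q t P lam - hP lam ∈ Vgt R lam := by
  have h1 : QQ q t P lam ∈ Vge R lam := Submodule.smul_mem _ _ (h.RR_mem lam)
  have h2 : Vge R lam ≤ Submodule.span R {hP lam} ⊔ Vgt R lam := by
    unfold Vge
    rw [Submodule.span_le]
    rintro _ ⟨ka, hka, rfl⟩
    by_cases he : lam = ka
    · rw [← he]
      exact Submodule.mem_sup_left (Submodule.mem_span_singleton_self _)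
    · exact Submodule.mem_sup_right (hP_mem_Vgt ⟨he, hka⟩)
  obtain ⟨y, hy, z, hz, hyz⟩ := Submodule.mem_sup.mp (h2 h1)
  obtain ⟨a, rfl⟩ := Submodule.mem_span_singleton.mp hy
  have h3 := h.QQ_pair lam lam
  rw [← hyz, map_add, map_smul, h.Vgt_perp lam z hz, h.P_hP lam lam (fun hc => hc.1 rfl),
    if_pos rfl, add_zero, smul_eq_mul, mul_one] at h3
  rw [← hyz, h3, one_smul, add_sub_cancel_left]
  exact hz

lemma MB.QQ_eig (h : MB q t P) (lam : Multiset ℕ+) :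
    Dop q t⁻¹ (QQ q t P lam) = ee q t⁻¹ lam • QQ q t P lam := by
  rw [← sub_eq_zero]
  apply h.ext kH kH_ne
  intro mu
  rw [Fm_symm, map_sub, map_smul, h.QQ_pair]
  by_cases hm : mu = lam
  · subst hm
    rw [if_pos rfl, smul_eq_mul, mul_one, sub_eq_zero]
    have h1 := h.QQ_lead mu
    have h2 : Dop q t⁻¹ (QQ q t P mu - hP mu) ∈ Vgt R mu := by
      have : Vgt R mu ≤ (Vgt R mu).comap (Dop q t⁻¹) := by
        conv_lhs => unfold Vgt
        rw [Submodule.span_le]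
        rintro _ ⟨ka, hka, rfl⟩
        exact Vge_le_Vgt hka (Dop_Vge _ _ _ _ (hP_mem_Vge (DomLE.refl ka)))
      exact this h1
    have h3 := h.Vgt_perp mu _ h2
    have h4 := h.Vgt_perp mu _ (Dop_hP q t⁻¹ mu)
    rw [map_sub, map_sub, sub_eq_zero] at h3
    rw [map_sub, map_smul, sub_eq_zero, h.P_hP mu mu (fun hc => hc.1 rfl), if_pos rfl, smul_eq_mul,
      mul_one] at h4
    rw [h3, h4]
  · rw [if_neg hm, smul_zero, sub_zero, QQ, map_smul, map_smul, h.Dop_perp hm, smul_zero]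

end Eigen
end QR
end

open MvPolynomial
noncomputable section
namespace QR

section Rect

/-- rectangle -/
abbrev rect (l : ℕ) (r : ℕ+) : Multiset ℕ+ := Multiset.replicate l r

lemma desc_rect (l : ℕ) (r : ℕ+) : descParts (rect l r) = List.replicate l (r : ℕ) := by
  have h := desc_perm (rect l r)
  have h2 : (rect l r).map (fun a : ℕ+ => (a : ℕ)) = ((List.replicate l (r : ℕ) : List ℕ) : Multiset ℕ) := by
    rw [rect, Multiset.map_replicate, Multiset.coe_replicate]
  exact List.perm_replicate.mp (Multiset.coe_eq_coe.mp (h.trans h2))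

lemma pt_rect (l : ℕ) (r : ℕ+) (i : ℕ) : pt (rect l r) i = if i < l then (r : ℕ) else 0 := by
  rw [pt, desc_rect]
  by_cases h : i < l
  · rw [if_pos h, List.getD_eq_getElem _ _ (by simpa using h), List.getElem_replicate]
  · rw [if_neg h, List.getD_eq_default _ _ (by simpa using h)]

lemma wt_rect (l : ℕ) (r : ℕ+) : wt (rect l r) = l * r := by
  rw [wt_eq, desc_rect]; simp

lemma card_rect (l : ℕ) (r : ℕ+) : Multiset.card (rect l r) = l := Multiset.card_replicate _ _

lemma pSum_rect (l : ℕ) (r : ℕ+) (k : ℕ) (hk : k ≤ l) : pSum (rect l r) k = k * r := by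
  rw [pSum_eq, Finset.sum_congr rfl (g := fun _ => (r : ℕ))]
  · simp
  · intro i hi
    have : i < k := by simpa using hi
    rw [pt_rect, if_pos (by omega)]

lemma anti_avg (f : ℕ → ℕ) (hf : ∀ i j, i ≤ j → f j ≤ f i) (k l : ℕ) (h : k ≤ l) :
    k * ∑ i ∈ Finset.range l, f i ≤ l * ∑ i ∈ Finset.range k, f i := by
  induction l, h using Nat.le_induction with
  | base => exact le_rfl
  | succ l hkl ih =>
    rw [Finset.sum_range_succ, mul_add, add_mul, one_mul]
    have : k * f l ≤ ∑ i ∈ Finset.range k, f i := by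
      have := Finset.card_nsmul_le_sum (Finset.range k) f (f l) (fun i hi => hf i l (by simp at hi; omega))
      simpa using this
    omega

lemma rect_le (l : ℕ) (hl : 0 < l) (r : ℕ+) (ka : Multiset ℕ+) (hw : wt ka = l * r)
    (hc : Multiset.card ka ≤ l) : DomLE (rect l r) ka := by
  refine ⟨by rw [wt_rect, hw], fun k => ?_⟩
  by_cases hk : k ≤ l
  · rw [pSum_rect l r k hk]
    have h1 := anti_avg (pt ka) (fun i j h => pt_anti ka h) k l hk
    rw [← pSum_eq, ← pSum_eq, pSum_wt ka hc, hw] at h1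
    apply Nat.le_of_mul_le_mul_left _ hl
    calc l * (k * r) = k * (l * r) := by ring
      _ ≤ _ := h1
  · rw [pSum_wt ka (by omega), hw, ← wt_rect]
    exact pSum_le_wt _ _

lemma rect_lt_msf (l : ℕ) (hl : 0 < l) (r : ℕ+) (b : Fin l → ℕ) (hs : ∑ i, b i = l * r)
    (hb : ∃ i, b i ≠ r) : StrictDom (rect l r) (msf b) := by
  refine ⟨fun he => ?_, rect_le l hl r _ (by rw [wt_msf, hs]) ?_⟩
  · obtain ⟨i, hi⟩ := hb
    apply hi
    have h1 := ms_map ((Finset.univ : Finset (Fin l)).val.map b)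
    have he' : ms ((Finset.univ : Finset (Fin l)).val.map b) = rect l r := he.symm
    rw [he', rect, Multiset.map_replicate] at h1
    have h2 : Multiset.filter (0 < ·) ((Finset.univ : Finset (Fin l)).val.map b) =
        (Finset.univ : Finset (Fin l)).val.map b := by
      apply Multiset.eq_of_le_of_card_le (Multiset.filter_le _ _)
      rw [← h1]; simp
    rw [h2] at h1
    have h3 : b i ∈ (Finset.univ : Finset (Fin l)).val.map b :=
      Multiset.mem_map_of_mem b (Finset.mem_univ i)
    rw [← h1] at h3
    exact Multiset.eq_of_mem_replicate h3
  · have : Multiset.card (ms ((Finset.univ : Finset (Fin l)).val.map b)) ≤ l := by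
      unfold ms
      rw [Multiset.card_map]
      refine (Multiset.card_le_card (Multiset.filter_le _ _)).trans ?_
      simp
    exact this

lemma card_le_of_rect (l : ℕ) (r : ℕ+) (mu : Multiset ℕ+) (h : DomLE (rect l r) mu) :
    Multiset.card mu ≤ l := by
  rw [← pt_zero_iff]
  have h1 := h.2 l
  rw [pSum_wt _ (card_rect l r).le, h.1] at h1
  have h2 := pSum_succ mu l
  have h3 := pSum_le_wt mu (l + 1)
  omega

end Rect

section Pleth
set_option linter.unusedSectionVars false
variable {S : Type} [CommRing S] [Algebra ℚ S]

lemma EE_zero : EE (fun _ : ℕ+ => (0 : S)) = 1 := by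
  ext n
  rw [EE, PowerSeries.coeff_mk, hh_zero_fun, PowerSeries.coeff_one]

lemma EE_sum {ι : Type} (T : Finset ι) (c : ι → ℕ+ → S) :
    EE (fun k => ∑ i ∈ T, c i k) = ∏ i ∈ T, EE (c i) := by
  classical
  induction T using Finset.induction_on with
  | empty => simp [EE_zero]
  | insert a T ha ih =>
    rw [Finset.prod_insert ha, ← ih, ← EE_add]
    congr 1
    funext k
    rw [Finset.sum_insert ha]

lemma hh_mult (l : ℕ+) (e : ℕ+ → S) (r : ℕ) :
    hh (fun k : ℕ+ => if (l : ℕ) ∣ (k : ℕ) then ((l : ℕ) : S) * e k else 0) (l * r) =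
      hh (fun k => e (l * k)) r := by
  have hl := l.pos
  have := hh_unique (fun k : ℕ+ => if (l : ℕ) ∣ (k : ℕ) then ((l : ℕ) : S) * e k else 0)
    (fun n => if (l : ℕ) ∣ n then hh (fun k => e (l * k)) (n / l) else 0) (by simp) (by
    intro n
    have hsc : ∀ i : ℕ, ((Nat.succPNat i : ℕ+) : ℕ) = i + 1 := fun i => rfl
    beta_reduce
    by_cases hd : (l : ℕ) ∣ n + 1
    · rw [if_pos hd]
      obtain ⟨m', hm⟩ := hd
      obtain ⟨m, rfl⟩ : ∃ m, m' = m + 1 := by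
        cases m' with
        | zero => simp at hm
        | succ m => exact ⟨m, rfl⟩
      rw [hm, Nat.mul_div_cancel_left _ hl]
      have h1 : ((n : S) + 1) = ((l : ℕ) : S) * ((m : S) + 1) := by exact_mod_cast congrArg (Nat.cast (R := S)) hm
      rw [h1, mul_assoc, hh_rec, Finset.mul_sum]
      have hlt : ∀ j, (l : ℕ) * (j + 1) - 1 + 1 = l * (j + 1) := fun j => by
        have : 0 < (l : ℕ) * (j + 1) := by positivity
        omega
      refine Finset.sum_of_injOn (fun j => (l : ℕ) * (j + 1) - 1) ?_ ?_ ?_ ?_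
      · intro a _ b _ hab
        simp only at hab
        have h2 : (l : ℕ) * (a + 1) = l * (b + 1) := by rw [← hlt a, ← hlt b, hab]
        have := Nat.eq_of_mul_eq_mul_left hl h2
        omega
      · intro j hj
        simp only [Finset.coe_range, Set.mem_Iio] at hj ⊢
        have h2 : (l : ℕ) * (j + 1) ≤ l * (m + 1) := Nat.mul_le_mul_left _ (by omega)
        have := hlt j
        omega
      · intro i hi hni
        by_cases hdi : (l : ℕ) ∣ ((Nat.succPNat i : ℕ+) : ℕ)
        · exfalso
          apply hni
          obtain ⟨j', hj⟩ := hdi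
          rw [hsc] at hj
          cases j' with
          | zero => simp at hj
          | succ j =>
            refine ⟨j, ?_, by simp only; omega⟩
            simp only [Finset.coe_range, Set.mem_Iio]
            have hi' : i < l * (m + 1) := by simpa using hi
            have : (l : ℕ) * (j + 1) ≤ l * (m + 1) := by omega
            have := Nat.le_of_mul_le_mul_left this hl
            omega
        · rw [if_neg hdi, zero_mul]
      · intro j hj
        have hj' : j < m + 1 := by simpa using hj
        have hsub : n - ((l : ℕ) * (j + 1) - 1) = l * (m - j) := by
          have h2 : (l : ℕ) * (m + 1) = l * (j + 1) + l * (m - j) := by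
            rw [← mul_add]; congr 1; omega
          have := hlt j
          omega
        have hpn : Nat.succPNat ((l : ℕ) * (j + 1) - 1) = l * Nat.succPNat j := by
          apply PNat.coe_injective
          rw [Nat.succPNat_coe, PNat.mul_coe, Nat.succPNat_coe]
          exact hlt j
        beta_reduce
        rw [hpn, if_pos (by rw [PNat.mul_coe]; exact Dvd.intro _ rfl), hsub, if_pos (Dvd.intro _ rfl), Nat.mul_div_cancel_left _ hl,
          mul_assoc]
    · rw [if_neg hd, mul_zero]
      symm
      refine Finset.sum_eq_zero fun i hi => ?_
      have hi' : i < n + 1 := by simpa using hi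
      by_cases hdi : (l : ℕ) ∣ ((Nat.succPNat i : ℕ+) : ℕ)
      · have : ¬ (l : ℕ) ∣ n - i := by
          intro hc
          apply hd
          have := Nat.dvd_add hdi hc
          rw [hsc] at this
          rwa [show i + 1 + (n - i) = n + 1 by omega] at this
        rw [if_neg this, mul_zero]
      · rw [if_neg hdi, zero_mul]) (l * r)
  rw [← this]
  simp only [if_pos (Dvd.intro _ rfl : (l : ℕ) ∣ l * r), Nat.mul_div_cancel_left _ hl]

end Pleth

section Root
set_option linter.unusedSectionVars false
variable {R : Type} [Field R] [CharZero R]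

/-- `p_l ∘ h_r` -/
def GP (l : ℕ+) (r : ℕ) : MvPolynomial ℕ+ R := hh (fun k => X (l * k)) r

lemma geom_root {z : R} {l : ℕ} (hz : IsPrimitiveRoot z l) (k : ℕ) :
    ∑ i : Fin l, (z ^ (i : ℕ)) ^ k = if l ∣ k then (l : R) else 0 := by
  rw [Fin.sum_univ_eq_sum_range (fun i => (z ^ i) ^ k) l]
  have h : ∀ i, (z ^ i) ^ k = (z ^ k) ^ i := fun i => by rw [← pow_mul, ← pow_mul, mul_comm]
  simp only [h]
  split_ifs with hd
  · rw [(hz.pow_eq_one_iff_dvd k).mpr hd]; simp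
  · have hne : z ^ k ≠ 1 := fun hc => hd ((hz.pow_eq_one_iff_dvd k).mp hc)
    have := geom_sum_mul (z ^ k) l
    rw [← pow_mul, mul_comm k l, pow_mul, hz.pow_eq_one, one_pow, sub_self] at this
    exact (mul_eq_zero.mp this).resolve_right (sub_ne_zero.mpr hne)

lemma GP_expand {z : R} (l : ℕ+) (hz : IsPrimitiveRoot z (l : ℕ)) (r : ℕ) :
    GP (R := R) l r = ∑ b ∈ Finset.finsuppAntidiag (Finset.univ : Finset (Fin (l : ℕ))) ((l : ℕ) * r),
      (∏ i : Fin (l : ℕ), (z ^ (i : ℕ)) ^ b i) • hP (msf b) := by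
  unfold GP
  rw [← hh_mult l X r]
  have h1 : (fun k : ℕ+ => if (l : ℕ) ∣ (k : ℕ) then ((l : ℕ) : MvPolynomial ℕ+ R) * X k else 0) =
      fun k : ℕ+ => ∑ i : Fin (l : ℕ), (C (z ^ (i : ℕ)) : MvPolynomial ℕ+ R) ^ (k : ℕ) * X k := by
    funext k
    rw [← Finset.sum_mul]
    have := congrArg (C : R →+* MvPolynomial ℕ+ R) (geom_root hz (k : ℕ))
    rw [map_sum] at this
    simp only [map_pow] at this ⊢
    rw [this]
    split_ifs <;> simp
  rw [h1]
  have h2 := congrArg (PowerSeries.coeff ((l : ℕ) * r)) (EE_sum (Finset.univ : Finset (Fin (l : ℕ)))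
    (fun i (k : ℕ+) => (C (z ^ (i : ℕ)) : MvPolynomial ℕ+ R) ^ (k : ℕ) * X k))
  rw [PowerSeries.coeff_prod] at h2
  rw [EE, PowerSeries.coeff_mk] at h2
  rw [h2]
  refine Finset.sum_congr rfl fun b _ => ?_
  rw [hP_msf, smul_eq_C_mul, map_prod, ← Finset.prod_mul_distrib]
  refine Finset.prod_congr rfl fun i _ => ?_
  rw [EE, PowerSeries.coeff_mk, hh_scale, map_pow (C : R →+* MvPolynomial ℕ+ R) _ (b i)]

lemma root_sign {z : R} {l : ℕ} (hl : 0 < l) (hz : IsPrimitiveRoot z l) :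
    z ^ (∑ i ∈ Finset.range l, i) = (-1) ^ (l - 1) := by
  have h := Finset.sum_range_id_mul_two l
  rcases Nat.even_or_odd' l with ⟨m, hm | hm⟩
  · have h1 : ∑ i ∈ Finset.range l, i = m * (l - 1) := by
      have : (∑ i ∈ Finset.range l, i) * 2 = m * (l - 1) * 2 := by rw [h]; conv_lhs => rw [hm]
                                                                   rw [hm]; ring
      omega
    rw [h1, pow_mul]
    congr 1
    have h2 : (z ^ m - 1) * (z ^ m + 1) = 0 := by
      have := hz.pow_eq_one
      rw [hm, mul_comm, pow_mul] at this
      linear_combination this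
    rcases mul_eq_zero.mp h2 with h3 | h3
    · exfalso
      have := (hz.pow_eq_one_iff_dvd m).mp (sub_eq_zero.mp h3)
      have := Nat.le_of_dvd (by omega) this
      omega
    · exact eq_neg_of_add_eq_zero_left h3
  · have h1 : ∑ i ∈ Finset.range l, i = l * m := by
      rw [show l - 1 = 2 * m by omega] at h
      have : (∑ i ∈ Finset.range l, i) * 2 = l * m * 2 := by rw [h]; ring
      omega
    rw [h1, pow_mul, hz.pow_eq_one, one_pow, show l - 1 = 2 * m by omega, pow_mul]
    simp

lemma GP_lead {z : R} (l r : ℕ+) (hz : IsPrimitiveRoot z (l : ℕ)) :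
    ((-1 : R) ^ (((l : ℕ) - 1) * r)) • GP (R := R) l r - hP (rect l r) ∈ Vgt R (rect l r) := by
  have hl := l.pos
  set b0 : Fin (l : ℕ) →₀ ℕ := Finsupp.equivFunOnFinite.symm (fun _ => (r : ℕ)) with hb0
  have hmem : b0 ∈ Finset.finsuppAntidiag (Finset.univ : Finset (Fin (l : ℕ))) ((l : ℕ) * r) := by
    rw [Finset.mem_finsuppAntidiag]
    refine ⟨?_, Finset.subset_univ _⟩
    simp [hb0]
  have hms : msf (b0 : Fin (l : ℕ) → ℕ) = rect l r := by
    have h1 := msf_pt (rect l r) (card_rect l r).symm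
    rw [← h1]
    congr 1
    funext i
    rw [pt_rect, if_pos i.2]; rfl
  have hco : ∏ i : Fin (l : ℕ), (z ^ (i : ℕ)) ^ b0 i = (-1 : R) ^ (((l : ℕ) - 1) * r) := by
    have : ∀ i : Fin (l : ℕ), (z ^ (i : ℕ)) ^ b0 i = (z ^ (i : ℕ)) ^ (r : ℕ) := fun i => rfl
    rw [Finset.prod_congr rfl fun i _ => this i, Finset.prod_pow, Finset.prod_pow_eq_pow_sum,
      Fin.sum_univ_eq_sum_range (fun i => i), root_sign hl hz, pow_mul]
  rw [GP_expand l hz, ← Finset.add_sum_erase _ _ hmem, hms, hco, smul_add, smul_smul, ← mul_pow]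
  rw [mul_neg_one, neg_neg, one_pow, one_smul, add_sub_cancel_left]
  refine Submodule.smul_mem _ _ (Submodule.sum_mem _ fun b hb => Submodule.smul_mem _ _ ?_)
  rw [Finset.mem_erase, Finset.mem_finsuppAntidiag] at hb
  refine hP_mem_Vgt (rect_lt_msf l hl r _ hb.2.1 ?_)
  by_contra hc
  push Not at hc
  exact hb.1 (Finsupp.ext hc)

lemma GP_Dop {s : R} (q : R) (l : ℕ+) (hs : s ^ (l : ℕ) = 1) (r : ℕ) :
    Dop q s (GP l r) = GP (R := R) l r := by
  have h : tau s (GP l r) = Polynomial.C (GP (R := R) l r) := by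
    unfold GP
    have h1 := hh_map (tau s : MvPolynomial ℕ+ R →+* Polynomial (MvPolynomial ℕ+ R))
      (fun k => X (l * k)) r
    have h2 := hh_map (Polynomial.C : MvPolynomial ℕ+ R →+* Polynomial (MvPolynomial ℕ+ R))
      (fun k => X (l * k)) r
    rw [h2]
    refine h1.trans ?_
    congr 1
    funext k
    show tau s (X (l * k)) = _
    rw [tau, aeval_X, PNat.mul_coe, pow_mul, hs, one_pow, sub_self]
    simp
  rw [Dop_apply, h, evA_C, AA_zero, one_mul]

lemma ee_rect {s : R} (q : R) (l r : ℕ+) (hs : s ^ (l : ℕ) = 1) : ee q s (rect l r) = 1 := by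
  unfold ee
  rw [card_rect, Finset.sum_congr rfl (g := fun i => s ^ i * (q ^ (r : ℕ) - 1))]
  · rw [← Finset.sum_mul, ← mul_assoc]
    have := mul_neg_geom_sum s l
    rw [this, hs, sub_self, zero_mul, add_zero]
  · intro i hi
    rw [pt_rect, if_pos (by simpa using hi)]

end Root

section Nonvan

lemma ee_ne {z : ℂ} (l r : ℕ+) (hz : IsPrimitiveRoot z (l : ℕ)) (mu : Multiset ℕ+)
    (hmu : StrictDom (rect l r) mu) : ee qK (RatFunc.C z) mu ≠ 1 := by
  have hl := l.pos
  have hr := r.pos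
  have hcard := card_le_of_rect l r mu (sle hmu)
  have hwt : wt mu = l * r := by rw [← hmu.2.1, wt_rect]
  set a := pt mu 0 with ha
  have hapos : 0 < a := by
    rw [Nat.pos_iff_ne_zero]
    intro h0
    have := (pt_zero_iff mu 0).mp h0
    have h2 := pSum_wt mu this
    rw [hwt] at h2
    have h3 : pSum mu 0 = 0 := by simp [pSum]
    have : 0 < (l : ℕ) * r := by positivity
    omega
  have hex : ∃ i, pt mu i ≠ a := ⟨l, by rw [(pt_zero_iff mu l).mpr hcard]; omega⟩
  classical
  set m := Nat.find hex with hm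
  have hm1 : ∀ i < m, pt mu i = a := fun i hi => not_not.mp (Nat.find_min hex hi)
  have hm2 : ∀ i, m ≤ i → pt mu i ≠ a := by
    intro i hi hc
    have h1 := Nat.find_spec hex
    have h2 := pt_anti mu hi
    have h3 := pt_anti mu (Nat.zero_le m)
    rw [← hm] at h1
    omega
  have hm0 : 0 < m := by
    rw [Nat.pos_iff_ne_zero]
    intro h0
    exact hm2 0 (by omega) rfl
  have hml : m < l := by
    by_contra hc
    have h1 : pSum mu l = l * a := by
      rw [pSum_eq, Finset.sum_congr rfl (g := fun _ => a)]
      · simp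
      · intro i hi
        exact hm1 i (by simp at hi; omega)
    rw [pSum_wt mu hcard, hwt] at h1
    have h2 : (r : ℕ) = a := Nat.eq_of_mul_eq_mul_left hl h1
    apply hmu.1
    apply eq_of_pt
    intro i
    rw [pt_rect]
    by_cases hi : i < l
    · rw [if_pos hi, hm1 i (by omega), h2]
    · rw [if_neg hi, (pt_zero_iff mu i).mpr (by omega)]
  have hz1 : z ≠ 1 := by
    intro h1
    have := hz.pow_ne_one_of_pos_of_lt hm0.ne' hml
    simp [h1] at this
  intro he
  set p : Polynomial ℂ := ∑ i ∈ Finset.range l, Polynomial.C (z ^ i) * Polynomial.X ^ pt mu i with hp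
  have hp0 : algebraMap (Polynomial ℂ) KK p = 0 := by
    have h1 : algebraMap (Polynomial ℂ) KK p = ∑ i ∈ Finset.range l, (RatFunc.C z : KK) ^ i * qK ^ pt mu i := by
      rw [hp, map_sum]
      refine Finset.sum_congr rfl fun i _ => ?_
      simp only [map_mul, map_pow, RatFunc.algebraMap_X, RatFunc.algebraMap_C]
      rfl
    have h2 : ∑ i ∈ Finset.range (Multiset.card mu), (RatFunc.C z : KK) ^ i * (qK ^ pt mu i - 1) =
        ∑ i ∈ Finset.range l, (RatFunc.C z : KK) ^ i * (qK ^ pt mu i - 1) := by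
      refine Finset.sum_subset (Finset.range_subset_range.mpr hcard) fun i _ hi => ?_
      rw [(pt_zero_iff mu i).mpr (by simpa using hi)]; simp
    have hzl : (RatFunc.C z : KK) ^ (l : ℕ) = 1 := by rw [← map_pow, hz.pow_eq_one, map_one]
    have h3 := mul_neg_geom_sum (RatFunc.C z : KK) l
    rw [hzl, sub_self] at h3
    unfold ee at he
    rw [h2] at he
    simp only [mul_sub, mul_one, Finset.sum_sub_distrib] at he
    rw [h3, sub_zero] at he
    have h4 : (1 - RatFunc.C z : KK) * ∑ i ∈ Finset.range l, (RatFunc.C z : KK) ^ i * qK ^ pt mu i = 0 := by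
      linear_combination he
    rw [h1]
    refine (mul_eq_zero.mp h4).resolve_left ?_
    refine sub_ne_zero.mpr fun hc => ?_
    apply hz1
    apply (RatFunc.C : ℂ →+* KK).injective
    rw [map_one, ← hc]
  have hp1 : p = 0 := by
    apply RatFunc.algebraMap_injective ℂ
    rw [hp0, map_zero]
  have hco : p.coeff a = ∑ i ∈ Finset.range m, z ^ i := by
    rw [hp, Polynomial.finsetSum_coeff]
    symm
    refine (Finset.sum_congr rfl fun i hi => ?_).trans
      (Finset.sum_subset (Finset.range_subset_range.mpr hml.le) fun i _ hi => ?_)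
    · rw [Polynomial.coeff_C_mul_X_pow, hm1 i (by simpa using hi), if_pos rfl]
    · rw [Polynomial.coeff_C_mul_X_pow, if_neg (Ne.symm (hm2 i (by simpa using hi)))]
  rw [hp1, Polynomial.coeff_zero] at hco
  have h5 := geom_sum_mul z m
  rw [← hco, zero_mul] at h5
  exact hz.pow_ne_one_of_pos_of_lt hm0.ne' hml (sub_eq_zero.mp h5.symm)

end Nonvan
end QR
end

open MvPolynomial
noncomputable section
namespace QR

section MapSec
set_option linter.unusedSectionVars false
variable {R R' : Type} [CommRing R] [Algebra ℚ R] [CommRing R'] [Algebra ℚ R'] (f : R →+* R')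

lemma map_hP (mu : Multiset ℕ+) : MvPolynomial.map f (hP (R := R) mu) = hP mu := by
  unfold hP
  rw [map_multiset_prod, Multiset.map_map]
  congr 1
  refine Multiset.map_congr rfl fun a _ => ?_
  rw [Function.comp_apply, hh_map]
  simp only [map_X]

lemma map_AA (q : R) (n : ℕ) : MvPolynomial.map f (AA q n) = AA (f q) n := by
  unfold AA
  rw [hh_map]
  congr 1
  funext k
  simp

lemma map_tau (s : R) (g : MvPolynomial ℕ+ R) :
    Polynomial.map (MvPolynomial.map f) (tau s g) = tau (f s) (MvPolynomial.map f g) := by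
  induction g using MvPolynomial.induction_on with
  | C a => simp [tau, Polynomial.algebraMap_apply]
  | add p q hp hq => rw [map_add, Polynomial.map_add, hp, hq, map_add, map_add]
  | mul_X p k hp =>
    rw [map_mul, Polynomial.map_mul, hp, map_mul, map_mul]
    congr 1
    simp [tau]

lemma map_evA (A : ℕ → MvPolynomial ℕ+ R) (p : Polynomial (MvPolynomial ℕ+ R)) :
    MvPolynomial.map f (evA A p) =
      evA (fun n => MvPolynomial.map f (A n)) (Polynomial.map (MvPolynomial.map f) p) := by
  induction p using Polynomial.induction_on' with
  | add p q hp hq => rw [map_add, map_add, hp, hq, Polynomial.map_add, map_add]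
  | monomial n a =>
    rw [Polynomial.map_monomial, ← Polynomial.C_mul_X_pow_eq_monomial,
      ← Polynomial.C_mul_X_pow_eq_monomial, evA_C_mul_X_pow, evA_C_mul_X_pow, map_mul]

lemma map_Dop (q s : R) (g : MvPolynomial ℕ+ R) :
    MvPolynomial.map f (Dop q s g) = Dop (f q) (f s) (MvPolynomial.map f g) := by
  rw [Dop_apply, Dop_apply, map_evA, map_tau]
  congr 2
  funext n
  exact map_AA f q n

lemma map_ee (q s : R) (mu : Multiset ℕ+) : f (ee q s mu) = ee (f q) (f s) mu := by
  simp [ee, map_sum]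

lemma map_pSapply (q s : R) (S : Finset (Multiset ℕ+)) (g : MvPolynomial ℕ+ R) :
    MvPolynomial.map f (Polynomial.aeval (Dop q s) (pS q s S) g) =
      Polynomial.aeval (Dop (f q) (f s)) (pS (f q) (f s) S) (MvPolynomial.map f g) := by
  classical
  induction S using Finset.induction_on generalizing g with
  | empty => simp [pS]
  | insert a S ha ih =>
    have h1 : pS q s (insert a S) = pS q s S * (Polynomial.X - Polynomial.C (ee q s a)) := by
      unfold pS; rw [Finset.prod_insert ha, mul_comm]
    have h2 : pS (f q) (f s) (insert a S) =
        pS (f q) (f s) S * (Polynomial.X - Polynomial.C (ee (f q) (f s) a)) := by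
      unfold pS; rw [Finset.prod_insert ha, mul_comm]
    rw [h1, h2, map_mul, map_mul, Module.End.mul_apply, Module.End.mul_apply, ih]
    congr 1
    rw [map_sub, map_sub, Polynomial.aeval_X, Polynomial.aeval_C, Polynomial.aeval_X,
      Polynomial.aeval_C, LinearMap.sub_apply, LinearMap.sub_apply, map_sub, map_Dop,
      Module.algebraMap_end_apply, Module.algebraMap_end_apply, smul_eq_C_mul, smul_eq_C_mul,
      map_mul, map_C, map_ee]

lemma map_N (q s : R) (lam : Multiset ℕ+) :
    f (∏ mu ∈ Sgt lam, (ee q s lam - ee q s mu)) =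
      ∏ mu ∈ Sgt lam, (ee (f q) (f s) lam - ee (f q) (f s) mu) := by
  rw [map_prod]
  exact Finset.prod_congr rfl fun mu _ => by rw [map_sub, map_ee, map_ee]

end MapSec

section EvalSec
set_option linter.unusedSectionVars false
variable {K : Type} [Field K]

lemma eval_reflect {L : Type} [Field L] (i : K →+* L) (y : L) (hy : y ≠ 0) (d : ℕ) (f : Polynomial K)
    (hd : f.natDegree ≤ d) :
    Polynomial.eval₂ i y (Polynomial.reflect d f) = Polynomial.eval₂ i y⁻¹ f * y ^ d := by
  let _ : Invertible y⁻¹ := invertibleOfNonzero (inv_ne_zero hy)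
  have h := Polynomial.eval₂_reflect_mul_pow i y⁻¹ d f hd
  rw [invOf_eq_inv, inv_inv] at h
  rw [← h, mul_assoc, inv_pow, inv_mul_cancel₀ (pow_ne_zero d hy), mul_one]

lemma eval_of_eq (c : K) (hc : c ≠ 0) (N p : Polynomial K) (x : RatFunc K)
    (h : Polynomial.eval₂ (RatFunc.C : K →+* RatFunc K) (RatFunc.X)⁻¹ N * x =
      Polynomial.eval₂ (RatFunc.C : K →+* RatFunc K) (RatFunc.X)⁻¹ p)
    (hN : Polynomial.eval c⁻¹ N ≠ 0) :
    Polynomial.eval c⁻¹ N * RatFunc.eval (RingHom.id K) c x = Polynomial.eval c⁻¹ p := by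
  set d := max N.natDegree p.natDegree with hd
  have hNd : N.natDegree ≤ d := le_max_left _ _
  have hpd : p.natDegree ≤ d := le_max_right _ _
  have e1 := fun f hf => eval_reflect (RatFunc.C : K →+* RatFunc K) RatFunc.X RatFunc.X_ne_zero d f hf
  have e2 := fun f hf => eval_reflect (RingHom.id K) c hc d f hf
  have e3 : ∀ f : Polynomial K, Polynomial.eval₂ (RatFunc.C : K →+* RatFunc K) RatFunc.X f =
      algebraMap (Polynomial K) (RatFunc K) f := fun f => by
    rw [← RatFunc.aeval_X_left_eq_algebraMap, Polynomial.aeval_def, RatFunc.algebraMap_eq_C]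
  have hx := RatFunc.num_div_denom x
  have hden : algebraMap (Polynomial K) (RatFunc K) x.denom ≠ 0 :=
    RatFunc.algebraMap_ne_zero x.denom_ne_zero
  have h1 : Polynomial.reflect d N * x.num = Polynomial.reflect d p * x.denom := by
    apply RatFunc.algebraMap_injective K
    rw [map_mul, map_mul, ← e3 (Polynomial.reflect d N), ← e3 (Polynomial.reflect d p), e1 N hNd,
      e1 p hpd, ← h]
    rw [div_eq_iff hden] at hx
    rw [hx]; ring
  have h2 := congrArg (Polynomial.eval₂ (RingHom.id K) c) h1
  rw [Polynomial.eval₂_mul, Polynomial.eval₂_mul, e2 N hNd, e2 p hpd] at h2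
  simp only [Polynomial.eval₂_id] at h2
  have hcd : c ^ d ≠ 0 := pow_ne_zero d hc
  have hdc : Polynomial.eval c x.denom ≠ 0 := by
    intro h0
    rw [h0, mul_zero] at h2
    have h3 := (mul_eq_zero.mp h2).resolve_left (mul_ne_zero hN hcd)
    obtain ⟨a, b, hab⟩ := x.isCoprime_num_denom
    have h4 := congrArg (Polynomial.eval₂ (RingHom.id K) c) hab
    rw [Polynomial.eval₂_add, Polynomial.eval₂_mul, Polynomial.eval₂_mul] at h4
    simp [Polynomial.eval₂_id, h0, h3] at h4
  unfold RatFunc.eval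
  simp only [Polynomial.eval₂_id]
  rw [mul_div_assoc', div_eq_iff hdc]
  apply mul_right_cancel₀ hcd
  linear_combination h2

end EvalSec

section Bridge
set_option linter.unusedSectionVars false
variable {R : Type} [Field R] [CharZero R]

lemma hsym_eq (n : ℕ) : hsym (R := R) n = hh X n := by
  apply hh_unique
  · rw [hsym]
  · intro n
    rw [hsym]
    have h : (n : R) + 1 ≠ 0 := by exact_mod_cast Nat.succ_ne_zero n
    rw [smul_eq_C_mul, ← mul_assoc]
    rw [show ((n : MvPolynomial ℕ+ R) + 1) * C ((n : R) + 1)⁻¹ = 1 by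
      rw [show ((n : MvPolynomial ℕ+ R) + 1) = C ((n : R) + 1) by simp, ← C_mul, mul_inv_cancel₀ h, C_1],
      one_mul]
    rfl

lemma hInt_eq (z : ℤ) : hInt (R := R) z = hhz X z := by
  unfold hInt hhz; split_ifs
  · exact hsym_eq _
  · rfl

lemma schur_eq : schur (R := R) = sJ := by
  funext mu
  unfold schur sJ JT
  congr 1
  ext i j
  rw [Matrix.of_apply, Matrix.of_apply, hInt_eq]
  rfl

lemma inner_eq (q t : R) (f g : MvPolynomial ℕ+ R) : innerQT q t f g = Fm (kQ q t) f g := by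
  rw [Fm_apply]
  unfold innerQT
  refine Finset.sum_congr rfl fun m _ => ?_
  congr 1
  unfold zwtQT zw Finsupp.prod
  refine Finset.prod_congr rfl fun k _ => ?_
  have h1 : kQ q t k = ((k : ℕ) : R) * ((1 - q ^ (k : ℕ)) / (1 - t ^ (k : ℕ))) := rfl
  beta_reduce
  rw [h1, mul_pow, ← mul_assoc]

lemma Qprime_eq (q t : R) (P : Multiset ℕ+ → MvPolynomial ℕ+ R) (lam : Multiset ℕ+) :
    Qprime q t P lam = QQ q t P lam := by
  unfold Qprime Qfam QQ RR
  rw [map_smul, inner_eq]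
  rfl

lemma pleth_eq (l : ℕ+) (r : ℕ) : plethP l (hsym (R := R) r) = GP l r := by
  rw [hsym_eq, GP]
  have := hh_map (plethP (R := R) l : MvPolynomial ℕ+ R →+* MvPolynomial ℕ+ R) X r
  refine this.trans ?_
  congr 1
  funext k
  exact aeval_X _ _

lemma X_pow_ne {K : Type} [Field K] (k : ℕ) : 1 - (RatFunc.X : RatFunc K) ^ (k + 1) ≠ 0 := by
  intro h
  have h1 : (1 - Polynomial.X ^ (k + 1) : Polynomial K) = 0 := by
    apply RatFunc.algebraMap_injective K
    rw [map_sub, map_one, map_pow, RatFunc.algebraMap_X, map_zero, h]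
  have h2 := congrArg (fun p => Polynomial.coeff p 0) h1
  simp at h2

lemma toMB (P : Multiset ℕ+ → SymFn FF) (h : IsMacdonaldBasis qF tF P) : MB qF tF P where
  ht := RatFunc.X_ne_zero
  hq k := by
    unfold qF qK
    rw [← map_pow, ← map_one (RatFunc.C : KK →+* FF), ← map_sub]
    exact (map_ne_zero (RatFunc.C : KK →+* FF)).mpr (X_pow_ne k)
  ht' k := X_pow_ne k
  tri lam := by
    have := h.1 lam
    rwa [schur_eq] at this
  orth lam mu hne := by rw [← inner_eq]; exact h.2 lam mu hne

end Bridge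

lemma coeff_specT (c : KK) (f : SymFn FF) (m : ℕ+ →₀ ℕ) :
    coeff m (specT c f) = evalT c (coeff m f) := by
  unfold specT
  rw [coeff_sum]
  simp only [coeff_monomial]
  rw [Finset.sum_ite_eq' f.support m]
  split_ifs with h
  · rfl
  · rw [notMem_support_iff.mp h]
    exact (RatFunc.eval_zero _ _).symm

lemma main_aux {K : Type} [Field K] [CharZero K] (q c : K) (hc : c ≠ 0)
    (lam : Multiset ℕ+) (v : MvPolynomial ℕ+ (RatFunc K)) (w : MvPolynomial ℕ+ K)
    (hv1 : Dop (RatFunc.C q) (RatFunc.X)⁻¹ v = ee (RatFunc.C q) (RatFunc.X)⁻¹ lam • v)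
    (hv2 : v - hP lam ∈ Vgt (RatFunc K) lam)
    (hw1 : Dop q c⁻¹ w = ee q c⁻¹ lam • w) (hw2 : w - hP lam ∈ Vgt K lam)
    (hne : ∀ mu, StrictDom lam mu → ee q c⁻¹ lam ≠ ee q c⁻¹ mu) (m : ℕ+ →₀ ℕ) :
    RatFunc.eval (RingHom.id K) c (coeff m v) = coeff m w := by
  have pv := proj _ _ _ _ hv1 hv2
  have pw := proj _ _ _ _ hw1 hw2
  set φ : Polynomial K →+* RatFunc K :=
    Polynomial.eval₂RingHom (RatFunc.C : K →+* RatFunc K) (RatFunc.X)⁻¹ with hφ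
  set ψ : Polynomial K →+* K := Polynomial.evalRingHom c⁻¹ with hψ
  have φq : φ (Polynomial.C q) = RatFunc.C q := Polynomial.eval₂_C _ _
  have φs : φ Polynomial.X = (RatFunc.X)⁻¹ := Polynomial.eval₂_X _ _
  have ψq : ψ (Polynomial.C q) = q := Polynomial.eval_C
  have ψs : ψ Polynomial.X = c⁻¹ := Polynomial.eval_X
  set N : Polynomial K := ∏ mu ∈ Sgt lam,
    (ee (Polynomial.C q) Polynomial.X lam - ee (Polynomial.C q) Polynomial.X mu) with hN
  set y : MvPolynomial ℕ+ (Polynomial K) :=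
    Polynomial.aeval (Dop (Polynomial.C q) Polynomial.X)
      (pS (Polynomial.C q) Polynomial.X (Sgt lam)) (hP lam) with hy
  have n1 := map_N φ (Polynomial.C q) Polynomial.X lam
  have n2 := map_N ψ (Polynomial.C q) Polynomial.X lam
  have y1 := map_pSapply φ (Polynomial.C q) Polynomial.X (Sgt lam) (hP lam)
  have y2 := map_pSapply ψ (Polynomial.C q) Polynomial.X (Sgt lam) (hP lam)
  rw [φq, φs, ← hN] at n1
  rw [ψq, ψs, ← hN] at n2
  rw [φq, φs, ← hy, map_hP] at y1
  rw [ψq, ψs, ← hy, map_hP] at y2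
  rw [← n1, ← y1] at pv
  rw [← n2, ← y2] at pw
  have hN0 : ψ N ≠ 0 := by
    rw [n2]
    exact Finset.prod_ne_zero_iff.mpr fun mu hmu => sub_ne_zero.mpr (hne mu (mem_Sgt.mp hmu))
  have cv := congrArg (coeff m) pv
  have cw := congrArg (coeff m) pw
  rw [coeff_smul, coeff_map, smul_eq_mul] at cv cw
  have := eval_of_eq c hc N (coeff m y) (coeff m v) cv hN0
  apply mul_left_cancel₀ hN0
  exact this.trans cw.symm

theorem main (l r : ℕ+) (zeta : ℂ) (hzeta : IsPrimitiveRoot zeta (l : ℕ))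
    (P : Multiset ℕ+ → SymFn FF) (h : IsMacdonaldBasis qF tF P) :
    specT (RatFunc.C zeta) (Qprime qF tF P (Multiset.replicate l r)) =
      ((-1 : KK) ^ (((l : ℕ) - 1) * r)) • plethP l (hsym (R := KK) r) := by
  have hM := toMB P h
  have hz0 : zeta ≠ 0 := hzeta.ne_zero l.pos.ne'
  have hi := hzeta.inv
  have hCi : (RatFunc.C zeta : KK)⁻¹ = RatFunc.C zeta⁻¹ := (map_inv₀ _ _).symm
  have hpr : IsPrimitiveRoot (RatFunc.C zeta : KK) (l : ℕ) :=
    hzeta.map_of_injective (RatFunc.C : ℂ →+* KK).injective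
  have hsl : ((RatFunc.C zeta : KK)⁻¹) ^ (l : ℕ) = 1 := by
    rw [inv_pow, hpr.pow_eq_one, inv_one]
  rw [pleth_eq, Qprime_eq]
  refine MvPolynomial.ext _ _ fun m => ?_
  rw [coeff_specT]
  refine main_aux qK (RatFunc.C zeta) ((map_ne_zero _).mpr hz0) (rect l r) _ _ (hM.QQ_eig _)
    (hM.QQ_lead _) ?_ (GP_lead l r hpr) ?_ m
  · rw [map_smul, GP_Dop qK l hsl, ee_rect qK l r hsl, one_smul]
  · intro mu hmu
    rw [ee_rect qK l r hsl, hCi]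
    exact (ee_ne l r hi mu hmu).symm

end QR
end

noncomputable section

open MvPolynomial

/-- **Plethystic specialization of `Q'` at a primitive root of unity** (Theorem 3.3 of the
paper).  Let `l, r` be positive integers and `ζ` a primitive `l`-th root of unity.  Then
`Q'_{(r^l)}(x; q, ζ) = (-1)^{(l-1)r} (p_l ∘ h_r)(x)`. -/
theorem Qprime_rectangle_root_of_unity
    (l r : ℕ) (hl : 0 < l) (hr : 0 < r)
    (zeta : ℂ) (hzeta : IsPrimitiveRoot zeta l)
    (P : Multiset ℕ+ → SymFn FF) (hP : IsMacdonaldBasis qF tF P) :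
    specT (RatFunc.C zeta) (Qprime qF tF P (Multiset.replicate l ⟨r, hr⟩)) =
      ((-1 : KK) ^ ((l - 1) * r)) • plethP (⟨l, hl⟩ : ℕ+) (hsym (R := KK) r) := by
  exact QR.main ⟨l, hl⟩ ⟨r, hr⟩ zeta hzeta P hP
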